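/- arXiv:2106.09131 — 8 statements merged into one kernel-verified Lean document; each statement's English description precedes it below -/
import Mathlib

section
/- Let n ≥ 4, a ≥ 0 and r₀ > 0, and let μ be a finite Borel measure on Euclidean space ℝⁿ satisfying the (a,r₀)-monotonicity property. Then for every x ∈ ℝⁿ the (n−4)-density Θ^{n−4}(μ, x) := lim_{r→0⁺} r^{4−n} μ(closedBall x r) exists as a finite nonnegative real number, the function x ↦ Θ^{n−4}(μ, x) is upper semicontinuous on ℝⁿ, and consequently for every ε > 0 the set {x ∈ ℝⁿ : Θ^{n−4}(μ, x) ≥ ε} is closed. -/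
open MeasureTheory Metric Filter Set
open scoped Topology ENNReal

/-!
Since `e^{a r} → 1`, the density is also the limit of `e^{a r} r^{4-n} μ(closedBall x r)`, which
decreases to it as `r ↓ 0`. For fixed `r` this quantity is upper semicontinuous in `x`, because
`closedBall y r ⊆ closedBall x s` for `y` near `x` and `s > r`, and `μ(closedBall x s)` tends to
`μ(closedBall x r)` as `s ↓ r`. A decreasing limit of upper semicontinuous functions is again upper
semicontinuous.
-/

section MonotoneLimits

variable {α β : Type*} [LinearOrder α] [TopologicalSpace α] [OrderTopology α] [DenselyOrdered α]
  [TopologicalSpace β] {b c : α}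

theorem le_of_monotoneOn_Ioc_of_tendsto_nhdsGT [Preorder β] [ClosedIicTopology β]
    {f : α → β} {l : β} (hf : MonotoneOn f (Ioc b c)) (hl : Tendsto f (𝓝[>] b) (𝓝 l))
    {r : α} (hr : r ∈ Ioc b c) : l ≤ f r := by
  have : (𝓝[>] b).NeBot := nhdsGT_neBot_of_exists_gt ⟨r, hr.1⟩
  refine le_of_tendsto hl ?_
  filter_upwards [Ioc_mem_nhdsGT hr.1] with s hs
  exact hf ⟨hs.1, hs.2.trans hr.2⟩ hr hs.2

theorem exists_ge_tendsto_nhdsGT_of_monotoneOn_Ioc [ConditionallyCompleteLinearOrder β]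
    [OrderTopology β] {f : α → β} {m : β} (hbc : b < c) (hf : MonotoneOn f (Ioc b c))
    (hm : ∀ r ∈ Ioc b c, m ≤ f r) : ∃ l, m ≤ l ∧ Tendsto f (𝓝[>] b) (𝓝 l) := by
  have hne : (Ioo b c).Nonempty := nonempty_Ioo.2 hbc
  have hlower : m ∈ lowerBounds (f '' Ioo b c) :=
    forall_mem_image.2 fun r hr => hm r (Ioo_subset_Ioc_self hr)
  exact ⟨sInf (f '' Ioo b c), le_csInf (hne.image f) hlower,
    (hf.mono Ioo_subset_Ioc_self).tendsto_nhdsWithin_Ioo_right hne ⟨m, hlower⟩⟩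

theorem upperSemicontinuous_of_monotoneOn_Ioc_of_tendsto_nhdsGT {X : Type*} [TopologicalSpace X]
    [LinearOrder β] [OrderTopology β] {f : X → α → β} {Θ : X → β} (hbc : b < c)
    (hmono : ∀ x, MonotoneOn (f x) (Ioc b c))
    (hlim : ∀ x, Tendsto (f x) (𝓝[>] b) (𝓝 (Θ x)))
    (husc : ∀ x, ∀ᶠ r in 𝓝[>] b, UpperSemicontinuousAt (fun y => f y r) x) :
    UpperSemicontinuous Θ := by
  intro x t ht
  have : (𝓝[>] b).NeBot := nhdsGT_neBot_of_exists_gt ⟨c, hbc⟩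
  have hIoc : ∀ᶠ r in 𝓝[>] b, r ∈ Ioc b c := Ioc_mem_nhdsGT hbc
  obtain ⟨r, hrt, hr, hrusc⟩ :=
    (((hlim x).eventually_lt_const ht).and (hIoc.and (husc x))).exists
  filter_upwards [hrusc t hrt] with y hy
  exact (le_of_monotoneOn_Ioc_of_tendsto_nhdsGT (hmono y) (hlim y) hr).trans_lt hy

end MonotoneLimits

theorem upperSemicontinuousAt_toReal {X : Type*} [TopologicalSpace X] {f : X → ℝ≥0∞} {x : X}
    (hf : UpperSemicontinuousAt f x) (hx : f x ≠ ∞) :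
    UpperSemicontinuousAt (fun y => (f y).toReal) x := by
  intro t ht
  filter_upwards [hf (ENNReal.ofReal t) ((ENNReal.lt_ofReal_iff_toReal_lt hx).2 ht)] with y hy
  exact (ENNReal.lt_ofReal_iff_toReal_lt hy.ne_top).1 hy

theorem upperSemicontinuousAt_const_mul {X R : Type*} [TopologicalSpace X] [Semiring R]
    [LinearOrder R] [IsOrderedRing R] [TopologicalSpace R] [OrderTopology R] [ContinuousMul R]
    {f : X → R} {x : X} {k : R} (hf : UpperSemicontinuousAt f x) (hk : 0 ≤ k) :
    UpperSemicontinuousAt (fun y => k * f y) x :=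
  (continuous_const_mul k).continuousAt.comp_upperSemicontinuousAt hf
    (monotone_mul_left_of_nonneg hk)

section ClosedBall

variable {X : Type*} [PseudoMetricSpace X] [MeasurableSpace X] {μ : Measure X}

theorem eventually_measure_closedBall_ne_top [IsLocallyFiniteMeasure μ] (x : X) :
    ∀ᶠ r in 𝓝 (0 : ℝ), μ (closedBall x r) ≠ ∞ := by
  obtain ⟨s, hs, hμs⟩ := μ.finiteAt_nhds x
  filter_upwards [eventually_closedBall_subset hs] with r hr
  exact measure_ne_top_of_subset hr hμs.ne

variable [OpensMeasurableSpace X]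

theorem tendsto_measure_closedBall_nhdsGT {x : X} {r : ℝ} (hfin : ∃ s > r, μ (closedBall x s) ≠ ∞) :
    Tendsto (fun s => μ (closedBall x s)) (𝓝[>] r) (𝓝 (μ (closedBall x r))) := by
  rw [← biInter_gt_closedBall x r]
  exact tendsto_measure_biInter_gt (fun s _ => isClosed_closedBall.nullMeasurableSet)
    (fun _ _ _ hst => closedBall_subset_closedBall hst) hfin

theorem upperSemicontinuousAt_measure_closedBall {x : X} {r : ℝ}
    (hfin : ∃ s > r, μ (closedBall x s) ≠ ∞) :
    UpperSemicontinuousAt (fun y => μ (closedBall y r)) x := by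
  intro t ht
  obtain ⟨s, hst, hrs⟩ :=
    (((tendsto_measure_closedBall_nhdsGT hfin).eventually_lt_const ht).and
      self_mem_nhdsWithin).exists
  filter_upwards [ball_mem_nhds x (sub_pos.2 hrs)] with y hy
  have hsub : closedBall y r ⊆ closedBall x s :=
    closedBall_subset_closedBall' (by linarith [mem_ball.1 hy])
  exact (measure_mono hsub).trans_lt hst

theorem eventually_upperSemicontinuousAt_toReal_measure_closedBall [IsLocallyFiniteMeasure μ]
    (x : X) :
    ∀ᶠ r in 𝓝 (0 : ℝ), UpperSemicontinuousAt (fun y => (μ (closedBall y r)).toReal) x := by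
  filter_upwards [(eventually_measure_closedBall_ne_top (μ := μ) x).eventually_nhds] with r hr
  have hfin : ∃ s > r, μ (closedBall x s) ≠ ∞ := hr.exists_gt
  exact upperSemicontinuousAt_toReal (upperSemicontinuousAt_measure_closedBall hfin) hr.self_of_nhds

theorem exists_upperSemicontinuous_tendsto_mul_measure_closedBall [IsLocallyFiniteMeasure μ]
    {w : ℝ → ℝ} {r₀ : ℝ} (hr₀ : 0 < r₀) (hw : ∀ r ∈ Ioc 0 r₀, 0 ≤ w r)
    (hmono : ∀ x : X, MonotoneOn (fun r => w r * (μ (closedBall x r)).toReal) (Ioc 0 r₀)) :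
    ∃ Θ : X → ℝ,
      (∀ x, 0 ≤ Θ x ∧
        Tendsto (fun r => w r * (μ (closedBall x r)).toReal) (𝓝[>] 0) (𝓝 (Θ x))) ∧
      UpperSemicontinuous Θ := by
  choose Θ hΘ_nonneg hΘ_lim using fun x =>
    exists_ge_tendsto_nhdsGT_of_monotoneOn_Ioc hr₀ (hmono x)
      fun r hr => mul_nonneg (hw r hr) ENNReal.toReal_nonneg
  refine ⟨Θ, fun x => ⟨hΘ_nonneg x, hΘ_lim x⟩,
    upperSemicontinuous_of_monotoneOn_Ioc_of_tendsto_nhdsGT hr₀ hmono hΘ_lim fun x => ?_⟩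
  filter_upwards [nhdsWithin_le_nhds
    (eventually_upperSemicontinuousAt_toReal_measure_closedBall (μ := μ) x),
    Ioc_mem_nhdsGT hr₀] with r husc hr
  exact upperSemicontinuousAt_const_mul husc (hw r hr)

end ClosedBall

theorem tendsto_exp_mul_mul_nhdsGT_zero_iff {a l : ℝ} {g : ℝ → ℝ} :
    Tendsto (fun r => Real.exp (a * r) * g r) (𝓝[>] 0) (𝓝 l) ↔ Tendsto g (𝓝[>] 0) (𝓝 l) := by
  have hexp : Tendsto (fun r => Real.exp (a * r)) (𝓝[>] 0) (𝓝 1) := by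
    have hcont : Continuous fun r => Real.exp (a * r) := by fun_prop
    simpa using (hcont.tendsto 0).mono_left nhdsWithin_le_nhds
  simpa only [mul_one, mul_comm] using tendsto_mul_iff_of_ne_zero (f := g) (x := l) hexp one_ne_zero

theorem omega_ym_density_exists_usc_closed_general {X : Type*} [PseudoMetricSpace X]
    [MeasurableSpace X] [OpensMeasurableSpace X] (μ : Measure X) [IsLocallyFiniteMeasure μ]
    (p a : ℝ) {r₀ : ℝ} (hr₀ : 0 < r₀)
    (hmono : ∀ x : X,
      MonotoneOn (fun r : ℝ => Real.exp (a * r) * r ^ p * (μ (closedBall x r)).toReal)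
        (Ioc 0 r₀)) :
    ∃ Θ : X → ℝ,
      (∀ x, 0 ≤ Θ x ∧
        Tendsto (fun r : ℝ => r ^ p * (μ (closedBall x r)).toReal) (𝓝[>] 0) (𝓝 (Θ x))) ∧
      UpperSemicontinuous Θ ∧
      ∀ ε : ℝ, IsClosed {x | ε ≤ Θ x} := by
  have hw : ∀ r ∈ Ioc 0 r₀, 0 ≤ Real.exp (a * r) * r ^ p := fun r hr =>
    mul_nonneg (Real.exp_nonneg _) (Real.rpow_nonneg hr.1.le p)
  obtain ⟨Θ, hΘ, husc⟩ := exists_upperSemicontinuous_tendsto_mul_measure_closedBall hr₀ hw hmono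
  simp only [mul_assoc, tendsto_exp_mul_mul_nhdsGT_zero_iff] at hΘ
  exact ⟨Θ, hΘ, husc, husc.isClosed_preimage⟩

/-- For a finite Borel measure on `ℝⁿ` (`n ≥ 4`) satisfying the
`(a, r₀)`-monotonicity property (the function `r ↦ e^{a r} r^{4-n} μ(closedBall x r)` is
nondecreasing on `(0, r₀]` for every `x`), the `(n-4)`-density
`Θ(x) = lim_{r → 0⁺} r^{4-n} μ(closedBall x r)` exists as a finite nonnegative real at every
point, is upper semicontinuous in `x`, and the superlevel sets `{Θ ≥ ε}` are closed. -/
theorem omega_ym_density_exists_usc_closed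
    (n : ℕ) (hn : 4 ≤ n) (a : ℝ) (ha : 0 ≤ a) (r₀ : ℝ) (hr₀ : 0 < r₀)
    (μ : Measure (EuclideanSpace ℝ (Fin n))) [IsFiniteMeasure μ]
    (hmono : ∀ x : EuclideanSpace ℝ (Fin n),
      MonotoneOn
        (fun r : ℝ => Real.exp (a * r) * r ^ ((4 : ℝ) - n) * (μ (closedBall x r)).toReal)
        (Ioc (0 : ℝ) r₀)) :
    ∃ Θ : EuclideanSpace ℝ (Fin n) → ℝ,
      (∀ x, 0 ≤ Θ x ∧
        Tendsto (fun r : ℝ => r ^ ((4 : ℝ) - n) * (μ (closedBall x r)).toReal)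
          (𝓝[>] (0 : ℝ)) (𝓝 (Θ x))) ∧
      UpperSemicontinuous Θ ∧
      (∀ ε : ℝ, 0 < ε → IsClosed {x : EuclideanSpace ℝ (Fin n) | ε ≤ Θ x}) := by
  obtain ⟨Θ, hΘ, husc, hclosed⟩ :=
    omega_ym_density_exists_usc_closed_general μ ((4 : ℝ) - n) a hr₀ hmono
  exact ⟨Θ, hΘ, husc, fun ε _ => hclosed ε⟩
end

section
/- Let n ≥ 1, let μ_i be a sequence of finite Borel measures on Euclidean space ℝⁿ converging weakly to a finite Borel measure μ, let x_i → x in ℝⁿ, and let r > 0 be such that μ(metric sphere {y : dist(y,x) = r}) = 0. Then μ_i(closedBall x_i r) → μ(closedBall x r) and μ_i(ball x_i r) → μ(ball x r). -/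
open MeasureTheory Metric Filter Set
open scoped Topology ENNReal BoundedContinuousFunction

/-!
Balls are sublevel sets of the distance to their centre, and `dist · (xs i)` converges uniformly to
`dist · x`. Hence `closedBall (xs i) r` is eventually contained in `closedBall x d` for every
`d > r`, and the portmanteau inequality for the fixed closed set `closedBall x d`, followed by
`d ↓ r`, bounds the limsup of the masses. The same estimate for the complements, together with the
convergence of the total masses, bounds the liminf for open balls. The two bounds agree when the
limiting sphere is null.
-/

section SublevelSets

variable {Ω ι : Type*} [MeasurableSpace Ω] {L : Filter ι}

theorem tendsto_measure_setOf_le_nhdsGT {μ : Measure Ω} [IsFiniteMeasure μ] {f : Ω → ℝ}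
    (hf : Measurable f) (c : ℝ) :
    Tendsto (fun d => μ {y | f y ≤ d}) (𝓝[>] c) (𝓝 (μ {y | f y ≤ c})) := by
  have iInter_eq : ⋂ d > c, {y | f y ≤ d} = {y | f y ≤ c} := by
    ext y
    simpa only [mem_iInter, mem_ofPred_eq] using forall_gt_imp_ge_iff_le_of_dense
  rw [← iInter_eq]
  exact tendsto_measure_biInter_gt
    (fun d _ => (measurableSet_le hf measurable_const).nullMeasurableSet)
    (fun _ _ _ hde _ hy => le_trans hy hde) ⟨c + 1, lt_add_one c, measure_ne_top _ _⟩

theorem le_liminf_measure_of_limsup_measure_compl_le {μ : Measure Ω} [IsFiniteMeasure μ]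
    {μs : ι → Measure Ω} {E : Set Ω} {Es : ι → Set Ω}
    (hmass : Tendsto (fun i => μs i univ) L (𝓝 (μ univ))) (hE : NullMeasurableSet E μ)
    (hcompl : limsup (fun i => μs i (Es i)ᶜ) L ≤ μ Eᶜ) :
    μ E ≤ liminf (fun i => μs i (Es i)) L := by
  refine le_of_forall_lt_imp_le_of_dense fun a ha => ?_
  have limsup_lt : limsup (fun i => μs i (Es i)ᶜ) L < μ univ - a := by
    refine hcompl.trans_lt (lt_tsub_iff_left.mpr ?_)
    rw [← measure_add_measure_compl₀ hE]
    exact ENNReal.add_lt_add_right (measure_ne_top μ Eᶜ) ha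
  obtain ⟨b, limsup_lt_b, hb⟩ := exists_between limsup_lt
  refine le_liminf_of_le (h := ?_)
  filter_upwards [eventually_lt_of_limsup_lt limsup_lt_b,
    hmass.eventually_const_lt (lt_tsub_iff_left.mp hb)] with i compl_lt lt_mass
  refine le_of_not_gt fun lt_a => lt_mass.not_ge ?_
  calc μs i univ ≤ μs i (Es i) + μs i (Es i)ᶜ := by
        rw [← union_compl_self (Es i)]
        exact measure_union_le _ _
    _ ≤ a + b := add_le_add lt_a.le compl_lt.le

variable [TopologicalSpace Ω] [OpensMeasurableSpace Ω] [HasOuterApproxClosed Ω]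
  {μ : FiniteMeasure Ω} {μs : ι → FiniteMeasure Ω} {f : Ω → ℝ} {fs : ι → Ω → ℝ} {c : ℝ}
  {cs : ι → ℝ}

theorem limsup_measure_setOf_le_le (hμ : Tendsto μs L (𝓝 μ)) (hf : Continuous f)
    (hfs : TendstoUniformly fs f L) (hcs : Tendsto cs L (𝓝 c)) :
    limsup (fun i => (μs i : Measure Ω) {y | fs i y ≤ cs i}) L ≤ (μ : Measure Ω) {y | f y ≤ c} := by
  refine ge_of_tendsto (tendsto_measure_setOf_le_nhdsGT hf.measurable c) ?_
  filter_upwards [self_mem_nhdsWithin] with d hcd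
  obtain ⟨e, hce, hed⟩ := exists_between (mem_Ioi.mp hcd)
  have eventually_subset : ∀ᶠ i in L, {y | fs i y ≤ cs i} ⊆ {y | f y ≤ d} := by
    filter_upwards [Metric.tendstoUniformly_iff.mp hfs (d - e) (sub_pos.mpr hed),
      hcs.eventually_lt_const hce] with i hfi hci y hy
    have f_sub_lt : f y - fs i y < d - e := (le_abs_self _).trans_lt (hfi y)
    simp only [mem_ofPred_eq] at hy ⊢
    linarith
  calc limsup (fun i => (μs i : Measure Ω) {y | fs i y ≤ cs i}) L
      ≤ limsup (fun i => (μs i : Measure Ω) {y | f y ≤ d}) L :=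
        limsup_le_limsup (eventually_subset.mono fun _ h => measure_mono h)
    _ ≤ (μ : Measure Ω) {y | f y ≤ d} :=
        FiniteMeasure.limsup_measure_closed_le_of_tendsto hμ (isClosed_le hf continuous_const)

theorem le_liminf_measure_setOf_lt (hμ : Tendsto μs L (𝓝 μ)) (hf : Continuous f)
    (hfs : TendstoUniformly fs f L) (hcs : Tendsto cs L (𝓝 c)) :
    (μ : Measure Ω) {y | f y < c} ≤ liminf (fun i => (μs i : Measure Ω) {y | fs i y < cs i}) L := by
  have tendsto_univ :
      Tendsto (fun i => (μs i : Measure Ω) univ) L (𝓝 ((μ : Measure Ω) univ)) := by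
    simpa only [FiniteMeasure.ennreal_mass] using ENNReal.tendsto_coe.mpr hμ.mass
  refine le_liminf_measure_of_limsup_measure_compl_le tendsto_univ
    (isOpen_lt hf continuous_const).nullMeasurableSet ?_
  simpa only [compl_ofPred, not_lt, Pi.neg_apply, neg_le_neg_iff] using
    limsup_measure_setOf_le_le hμ hf.neg hfs.neg hcs.neg

theorem tendsto_measure_of_setOf_lt_subset_of_subset_setOf_le (hμ : Tendsto μs L (𝓝 μ))
    (hf : Continuous f) (hfs : TendstoUniformly fs f L) (hcs : Tendsto cs L (𝓝 c))
    (hnull : (μ : Measure Ω) {y | f y = c} = 0) {E : Set Ω} {Es : ι → Set Ω}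
    (hlt : {y | f y < c} ⊆ E) (hle : E ⊆ {y | f y ≤ c})
    (hlts : ∀ i, {y | fs i y < cs i} ⊆ Es i) (hles : ∀ i, Es i ⊆ {y | fs i y ≤ cs i}) :
    Tendsto (fun i => (μs i : Measure Ω) (Es i)) L (𝓝 ((μ : Measure Ω) E)) := by
  have lt_ae_eq_le : {y | f y < c} =ᵐ[(μ : Measure Ω)] {y | f y ≤ c} := by
    have ae_ne : ∀ᵐ y ∂(μ : Measure Ω), f y ≠ c := measure_eq_zero_iff_ae_notMem.mp hnull
    filter_upwards [ae_ne] with y hy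
    exact propext ⟨le_of_lt, fun h => lt_of_le_of_ne h hy⟩
  refine tendsto_of_le_liminf_of_limsup_le ?_ ?_
  · calc (μ : Measure Ω) E ≤ (μ : Measure Ω) {y | f y ≤ c} := measure_mono hle
      _ = (μ : Measure Ω) {y | f y < c} := (measure_congr lt_ae_eq_le).symm
      _ ≤ liminf (fun i => (μs i : Measure Ω) {y | fs i y < cs i}) L :=
          le_liminf_measure_setOf_lt hμ hf hfs hcs
      _ ≤ liminf (fun i => (μs i : Measure Ω) (Es i)) L :=
          liminf_le_liminf (.of_forall fun i => measure_mono (hlts i))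
  · calc limsup (fun i => (μs i : Measure Ω) (Es i)) L
        ≤ limsup (fun i => (μs i : Measure Ω) {y | fs i y ≤ cs i}) L :=
          limsup_le_limsup (.of_forall fun i => measure_mono (hles i))
      _ ≤ (μ : Measure Ω) {y | f y ≤ c} := limsup_measure_setOf_le_le hμ hf hfs hcs
      _ = (μ : Measure Ω) {y | f y < c} := (measure_congr lt_ae_eq_le).symm
      _ ≤ (μ : Measure Ω) E := measure_mono hlt

end SublevelSets

theorem weak_limit_moving_center_ball_mass_general {X ι : Type*} [PseudoMetricSpace X]
    [MeasurableSpace X] [OpensMeasurableSpace X] {L : Filter ι} {μs : ι → Measure X}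
    {μ : Measure X} [∀ i, IsFiniteMeasure (μs i)] [IsFiniteMeasure μ]
    (hweak : ∀ f : X →ᵇ ℝ, Tendsto (fun i => ∫ y, f y ∂(μs i)) L (𝓝 (∫ y, f y ∂μ)))
    {xs : ι → X} {x : X} (hx : Tendsto xs L (𝓝 x)) {rs : ι → ℝ} {r : ℝ}
    (hr : Tendsto rs L (𝓝 r)) (hsphere : μ (sphere x r) = 0) :
    Tendsto (fun i => (μs i).real (closedBall (xs i) (rs i))) L (𝓝 (μ.real (closedBall x r))) ∧
      Tendsto (fun i => (μs i).real (ball (xs i) (rs i))) L (𝓝 (μ.real (ball x r))) := by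
  let ν : FiniteMeasure X := ⟨μ, inferInstance⟩
  let νs : ι → FiniteMeasure X := fun i => ⟨μs i, inferInstance⟩
  have tendsto_ν : Tendsto νs L (𝓝 ν) :=
    FiniteMeasure.tendsto_iff_forall_integral_tendsto.mpr hweak
  have tendsto_dist : TendstoUniformly (fun i y => dist y (xs i)) (fun y => dist y x) L := by
    simp only [dist_comm _ (xs _), dist_comm _ x]
    exact fun u hu =>
      hx.eventually (UniformContinuous₂.tendstoUniformly uniformContinuous_dist u hu)
  have tendsto_real {E : Set X} {Es : ι → Set X} (hlt : ball x r ⊆ E) (hle : E ⊆ closedBall x r)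
      (hlts : ∀ i, ball (xs i) (rs i) ⊆ Es i) (hles : ∀ i, Es i ⊆ closedBall (xs i) (rs i)) :
      Tendsto (fun i => (μs i).real (Es i)) L (𝓝 (μ.real E)) :=
    (ENNReal.tendsto_toReal (measure_ne_top μ E)).comp <|
      tendsto_measure_of_setOf_lt_subset_of_subset_setOf_le tendsto_ν
        (continuous_id.dist continuous_const) tendsto_dist hr hsphere hlt hle hlts hles
  exact ⟨tendsto_real ball_subset_closedBall subset_rfl (fun _ => ball_subset_closedBall)
      fun _ => subset_rfl,
    tendsto_real subset_rfl ball_subset_closedBall (fun _ => subset_rfl)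
      fun _ => ball_subset_closedBall⟩

/-- moving-center portmanteau lemma. If finite Borel measures `μᵢ` on `ℝⁿ`
converge weakly to a finite Borel measure `μ`, the centers `xᵢ → x`, and the sphere
`{y | dist y x = r}` is `μ`-null for the radius `r > 0`, then the masses of the closed
(and open) balls `B_r(xᵢ)` for `μᵢ` converge to those of `B_r(x)` for `μ`. -/
theorem weak_limit_moving_center_ball_mass
    (n : ℕ) (hn : 1 ≤ n)
    (μs : ℕ → Measure (EuclideanSpace ℝ (Fin n))) (μ : Measure (EuclideanSpace ℝ (Fin n)))
    [∀ i, IsFiniteMeasure (μs i)] [IsFiniteMeasure μ]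
    (hweak : ∀ f : EuclideanSpace ℝ (Fin n) →ᵇ ℝ,
      Tendsto (fun i => ∫ y, f y ∂(μs i)) atTop (𝓝 (∫ y, f y ∂μ)))
    (xs : ℕ → EuclideanSpace ℝ (Fin n)) (x : EuclideanSpace ℝ (Fin n))
    (hx : Tendsto xs atTop (𝓝 x))
    (r : ℝ) (hr : 0 < r)
    (hsphere : μ {y : EuclideanSpace ℝ (Fin n) | dist y x = r} = 0) :
    Tendsto (fun i => (μs i (closedBall (xs i) r)).toReal) atTop
        (𝓝 ((μ (closedBall x r)).toReal)) ∧
      Tendsto (fun i => (μs i (ball (xs i) r)).toReal) atTop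
        (𝓝 ((μ (ball x r)).toReal)) :=
  weak_limit_moving_center_ball_mass_general hweak hx tendsto_const_nhds hsphere
end

section
/- Let n ≥ 4, a ≥ 0, r₀ > 0, and let μ_i be a sequence of finite Borel measures on Euclidean space ℝⁿ, each satisfying the (a,r₀)-monotonicity property, converging weakly to a finite Borel measure μ. Then μ also satisfies the (a,r₀)-monotonicity property, i.e. for every x ∈ ℝⁿ the function r ↦ e^{a r} r^{4−n} μ(closedBall x r) is nondecreasing on (0, r₀]. -/
open MeasureTheory Metric Filter Set
open scoped Topology ENNReal BoundedContinuousFunction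

/-!
On finite measures with the weak topology, the mass of a closed set is upper semicontinuous and the
mass of an open set is lower semicontinuous, so an inequality `c * ν G ≤ d * ν F` with `G` open, `F`
closed and `c, d ≥ 0` is a closed condition on `ν`. Since the weight `e^{a r} r^{4-n}` is continuous
in the radius `r`, the smaller of the two closed balls compared by the monotonicity property may be
replaced by an open one, which puts the property into this form.
-/

section Portmanteau

variable {X : Type*} [TopologicalSpace X] [HasOuterApproxClosed X] [MeasurableSpace X]
  [OpensMeasurableSpace X]

lemma upperSemicontinuous_measureReal_of_isClosed {F : Set X} (hF : IsClosed F) :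
    UpperSemicontinuous fun ν : FiniteMeasure X => (ν : Measure X).real F := by
  intro ν c hc
  have measure_lt : (ν : Measure X) F < ENNReal.ofReal c :=
    (ENNReal.lt_ofReal_iff_toReal_lt (measure_ne_top _ _)).2 hc
  have limsup_le : limsup (fun ν' : FiniteMeasure X => (ν' : Measure X) F) (𝓝 ν) ≤
      (ν : Measure X) F :=
    FiniteMeasure.limsup_measure_closed_le_of_tendsto tendsto_id hF
  filter_upwards [eventually_lt_of_limsup_lt (limsup_le.trans_lt measure_lt)] with ν' hν'
  exact (ENNReal.lt_ofReal_iff_toReal_lt (measure_ne_top _ _)).1 hν'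

lemma lowerSemicontinuous_measureReal_of_isOpen {G : Set X} (hG : IsOpen G) :
    LowerSemicontinuous fun ν : FiniteMeasure X => (ν : Measure X).real G := by
  have continuous_measureReal_univ :
      Continuous fun ν : FiniteMeasure X => (ν : Measure X).real univ :=
    NNReal.continuous_coe.comp FiniteMeasure.continuous_mass
  have measureReal_eq_univ_sub_compl (ν : FiniteMeasure X) :
      (ν : Measure X).real G = (ν : Measure X).real univ + -(ν : Measure X).real Gᶜ := by
    rw [measureReal_compl hG.measurableSet]
    ring
  simp only [measureReal_eq_univ_sub_compl]
  exact continuous_measureReal_univ.lowerSemicontinuous.add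
    (upperSemicontinuous_measureReal_of_isClosed hG.isClosed_compl).neg

lemma isClosed_setOf_const_mul_measureReal_le {G F : Set X} (hG : IsOpen G) (hF : IsClosed F)
    {c d : ℝ} (hc : 0 ≤ c) (hd : 0 ≤ d) :
    IsClosed {ν : FiniteMeasure X | c * (ν : Measure X).real G ≤ d * (ν : Measure X).real F} := by
  have lowerSemicontinuous_diff : LowerSemicontinuous fun ν : FiniteMeasure X =>
      c * (ν : Measure X).real G + -(d * (ν : Measure X).real F) :=
    ((continuous_const_mul c).comp_lowerSemicontinuous
        (lowerSemicontinuous_measureReal_of_isOpen hG) (monotone_mul_left_of_nonneg hc)).add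
      ((continuous_const_mul d).comp_upperSemicontinuous
        (upperSemicontinuous_measureReal_of_isClosed hF) (monotone_mul_left_of_nonneg hd)).neg
  simpa only [preimage, mem_Iic, ← sub_eq_add_neg, sub_nonpos]
    using lowerSemicontinuous_diff.isClosed_preimage 0

end Portmanteau

section ClosedBall

variable {X : Type*} [PseudoMetricSpace X] [MeasurableSpace X] {I : Set ℝ} {φ : ℝ → ℝ}

lemma monotoneOn_mul_measureReal_closedBall_iff (hI : I.OrdConnected) (hφ_cont : ContinuousOn φ I)
    (hφ_nonneg : ∀ r ∈ I, 0 ≤ φ r) (ν : Measure X) [IsFiniteMeasure ν] (x : X) :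
    MonotoneOn (fun r => φ r * ν.real (closedBall x r)) I ↔
      ∀ s ∈ I, ∀ r ∈ I, s < r → φ s * ν.real (ball x s) ≤ φ r * ν.real (closedBall x r) := by
  constructor
  · intro hmono s hs r hr hsr
    calc φ s * ν.real (ball x s)
        ≤ φ s * ν.real (closedBall x s) :=
          mul_le_mul_of_nonneg_left (measureReal_mono ball_subset_closedBall) (hφ_nonneg s hs)
      _ ≤ φ r * ν.real (closedBall x r) := hmono hs hr hsr.le
  · intro hball s hs r hr hsr
    rcases hsr.eq_or_lt with rfl | hsr
    · rfl
    have Ioo_subset : Ioo s r ⊆ I := Ioo_subset_Icc_self.trans (hI.out hs hr)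
    have tendsto_weight : Tendsto φ (𝓝[>] s) (𝓝 (φ s)) :=
      nhdsWithin_Ioo_eq_nhdsGT hsr ▸ (hφ_cont s hs).mono Ioo_subset
    refine le_of_tendsto (tendsto_weight.mul_const _) ?_
    filter_upwards [Ioo_mem_nhdsGT hsr] with t ht
    calc φ t * ν.real (closedBall x s)
        ≤ φ t * ν.real (ball x t) :=
          mul_le_mul_of_nonneg_left (measureReal_mono (closedBall_subset_ball ht.1))
            (hφ_nonneg t (Ioo_subset ht))
      _ ≤ φ r * ν.real (closedBall x r) := hball t (Ioo_subset ht) r hr ht.2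

variable [OpensMeasurableSpace X]

lemma isClosed_setOf_monotoneOn_mul_measureReal_closedBall (hI : I.OrdConnected)
    (hφ_cont : ContinuousOn φ I) (hφ_nonneg : ∀ r ∈ I, 0 ≤ φ r) (x : X) :
    IsClosed {ν : FiniteMeasure X |
      MonotoneOn (fun r => φ r * (ν : Measure X).real (closedBall x r)) I} := by
  simp only [monotoneOn_mul_measureReal_closedBall_iff hI hφ_cont hφ_nonneg, ofPred_forall]
  exact isClosed_biInter fun s hs => isClosed_biInter fun r hr => isClosed_iInter fun _ =>
    isClosed_setOf_const_mul_measureReal_le isOpen_ball isClosed_closedBall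
      (hφ_nonneg s hs) (hφ_nonneg r hr)

theorem monotonicity_passes_to_weak_limit_general (hI : I.OrdConnected)
    (hφ_cont : ContinuousOn φ I) (hφ_nonneg : ∀ r ∈ I, 0 ≤ φ r) {ι : Type*} {L : Filter ι}
    {μs : ι → Measure X} {μ : Measure X} [∀ i, IsFiniteMeasure (μs i)] [IsFiniteMeasure μ] {x : X}
    (hmono : ∃ᶠ i in L, MonotoneOn (fun r => φ r * (μs i).real (closedBall x r)) I)
    (hweak : ∀ f : X →ᵇ ℝ, Tendsto (fun i => ∫ y, f y ∂(μs i)) L (𝓝 (∫ y, f y ∂μ))) :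
    MonotoneOn (fun r => φ r * μ.real (closedBall x r)) I := by
  let νs (i : ι) : FiniteMeasure X := ⟨μs i, inferInstance⟩
  let ν : FiniteMeasure X := ⟨μ, inferInstance⟩
  have tendsto_νs : Tendsto νs L (𝓝 ν) :=
    FiniteMeasure.tendsto_iff_forall_integral_tendsto.2 hweak
  have isClosed_monotone :=
    isClosed_setOf_monotoneOn_mul_measureReal_closedBall hI hφ_cont hφ_nonneg x
  exact isClosed_monotone.mem_of_frequently_of_tendsto hmono tendsto_νs

end ClosedBall

lemma continuousOn_exp_mul_rpow_Ioi (a p : ℝ) :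
    ContinuousOn (fun r : ℝ => Real.exp (a * r) * r ^ p) (Ioi 0) :=
  ContinuousOn.mul (by fun_prop) fun r hr =>
    (Real.continuousAt_rpow_const r p (Or.inl (ne_of_gt hr))).continuousWithinAt

/-- The `(a, r₀)`-monotonicity property (for every `x` the function
`r ↦ e^{a r} r^{4-n} ν(closedBall x r)` is nondecreasing on `(0, r₀]`) passes from a
weakly convergent sequence of finite Borel measures on `ℝⁿ` to its weak limit. -/
theorem monotonicity_passes_to_weak_limit
    (n : ℕ) (hn : 4 ≤ n) (a : ℝ) (ha : 0 ≤ a) (r₀ : ℝ) (hr₀ : 0 < r₀)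
    (μs : ℕ → Measure (EuclideanSpace ℝ (Fin n))) (μ : Measure (EuclideanSpace ℝ (Fin n)))
    [∀ i, IsFiniteMeasure (μs i)] [IsFiniteMeasure μ]
    (hmono : ∀ i, ∀ x : EuclideanSpace ℝ (Fin n),
      MonotoneOn
        (fun r : ℝ => Real.exp (a * r) * r ^ ((4 : ℝ) - n) * (μs i (closedBall x r)).toReal)
        (Ioc (0 : ℝ) r₀))
    (hweak : ∀ f : EuclideanSpace ℝ (Fin n) →ᵇ ℝ,
      Tendsto (fun i => ∫ y, f y ∂(μs i)) atTop (𝓝 (∫ y, f y ∂μ))) :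
    ∀ x : EuclideanSpace ℝ (Fin n),
      MonotoneOn
        (fun r : ℝ => Real.exp (a * r) * r ^ ((4 : ℝ) - n) * (μ (closedBall x r)).toReal)
        (Ioc (0 : ℝ) r₀) :=
  fun x => monotonicity_passes_to_weak_limit_general ordConnected_Ioc
    ((continuousOn_exp_mul_rpow_Ioi a _).mono Ioc_subset_Ioi_self)
    (fun _ hr => mul_nonneg (Real.exp_nonneg _) (Real.rpow_nonneg hr.1.le _))
    (Frequently.of_forall (hmono · x)) hweak
end

section
/- Let n ≥ 4, a ≥ 0, r₀ > 0, and let μ_i be a sequence of finite Borel measures on Euclidean space ℝⁿ, each satisfying the (a,r₀)-monotonicity property, converging weakly to a finite Borel measure μ. Then for every x ∈ ℝⁿ the limit lim_{r→0⁺} ( liminf_{i→∞} r^{4−n} μ_i(closedBall x r) ) exists and equals the density Θ^{n−4}(μ, x) := lim_{r→0⁺} r^{4−n} μ(closedBall x r). In particular, for every ε > 0 the set { x : lim_{r→0⁺} liminf_{i→∞} r^{4−n} μ_i(closedBall x r) ≥ ε } coincides with { x : Θ^{n−4}(μ, x) ≥ ε }. -/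
open MeasureTheory Metric Filter Set
open scoped Topology ENNReal BoundedContinuousFunction

/-!
Write `g r = μ (closedBall x r)` and `h r = liminf μᵢ (closedBall x r)`. Weak convergence gives
`g s ≤ h r ≤ g r` for `s < r`. Let `w r = exp (a r) r ^ p` be the weight for which every
`w r μᵢ (closedBall x r)` is nondecreasing. Then `w h` is nondecreasing, so
`w t g s ≤ w t h t ≤ w r h r` whenever `s < t < r`; letting `t ↓ s` gives the interlacing
`w s g s ≤ w r h r ≤ w r g r` for `s < r`. Hence `w g` is nondecreasing and has a limit at `0⁺`,
to which `w h` is squeezed. The factor `exp (a r)` tends to `1` and does not affect the limits.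
-/

section Liminf

variable {ι : Type*} {l : Filter ι} [l.NeBot]

theorem liminf_const_mul_of_nonneg {u : ι → ℝ} {c : ℝ} (hc : 0 ≤ c)
    (hu_le : l.IsBoundedUnder (· ≤ ·) u) (hu_ge : l.IsBoundedUnder (· ≥ ·) u) :
    liminf (fun i => c * u i) l = c * liminf u l :=
  ((monotone_mul_left_of_nonneg hc).map_liminf_of_continuousAt u
    (continuous_const_mul c).continuousAt hu_le.isCoboundedUnder_ge hu_ge).symm

theorem monotoneOn_mul_liminf {α : Type*} [Preorder α] {T : Set α} {w : α → ℝ} {u : ι → α → ℝ}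
    (hw : ∀ r ∈ T, 0 ≤ w r) (hu_le : ∀ r ∈ T, l.IsBoundedUnder (· ≤ ·) fun i => u i r)
    (hu_ge : ∀ r ∈ T, l.IsBoundedUnder (· ≥ ·) fun i => u i r)
    (hmono : ∀ᶠ i in l, MonotoneOn (fun r => w r * u i r) T) :
    MonotoneOn (fun r => w r * liminf (fun i => u i r) l) T := by
  intro s hs t ht hst
  have mul_left_mono {r : α} (hr : r ∈ T) : Monotone (w r * ·) :=
    monotone_mul_left_of_nonneg (hw r hr)
  calc w s * liminf (fun i => u i s) l
      = liminf (fun i => w s * u i s) l :=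
        (liminf_const_mul_of_nonneg (hw s hs) (hu_le s hs) (hu_ge s hs)).symm
    _ ≤ liminf (fun i => w t * u i t) l :=
        liminf_le_liminf (hmono.mono fun _ hi => hi hs ht hst)
          ((mul_left_mono hs).isBoundedUnder_ge_comp (hu_ge s hs))
          ((mul_left_mono ht).isBoundedUnder_le_comp (hu_le t ht)).isCoboundedUnder_ge
    _ = w t * liminf (fun i => u i t) l :=
        liminf_const_mul_of_nonneg (hw t ht) (hu_le t ht) (hu_ge t ht)

end Liminf

section Portmanteau

variable {E ι : Type*} [MeasurableSpace E] {l : Filter ι} {μs : ι → FiniteMeasure E}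
  {μ : FiniteMeasure E}

theorem isBoundedUnder_ge_measureReal (μs : ι → FiniteMeasure E) (A : Set E) :
    l.IsBoundedUnder (· ≥ ·) fun i => (μs i : Measure E).real A :=
  isBoundedUnder_of ⟨0, fun _ => measureReal_nonneg⟩

variable [TopologicalSpace E] [OpensMeasurableSpace E]

theorem isBoundedUnder_le_measureReal (hμ : Tendsto μs l (𝓝 μ)) (A : Set E) :
    l.IsBoundedUnder (· ≤ ·) fun i => (μs i : Measure E).real A :=
  (NNReal.tendsto_coe.2 hμ.mass).isBoundedUnder_le.mono_le
    (.of_forall fun _ => measureReal_mono (subset_univ A))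

variable [HasOuterApproxClosed E]

theorem eventually_measureReal_lt_of_isClosed (hμ : Tendsto μs l (𝓝 μ)) {F : Set E}
    (hF : IsClosed F) {c : ℝ} (hc : (μ : Measure E).real F < c) :
    ∀ᶠ i in l, (μs i : Measure E).real F < c := by
  have hlimsup : limsup (fun i => (μs i : Measure E) F) l < ENNReal.ofReal c :=
    (FiniteMeasure.limsup_measure_closed_le_of_tendsto hμ hF).trans_lt
      ((ENNReal.lt_ofReal_iff_toReal_lt (measure_ne_top _ F)).2 hc)
  filter_upwards [eventually_lt_of_limsup_lt hlimsup] with i hi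
  exact (ENNReal.lt_ofReal_iff_toReal_lt (measure_ne_top _ F)).1 hi

theorem eventually_lt_measureReal_of_isOpen (hμ : Tendsto μs l (𝓝 μ)) {G : Set E}
    (hG : IsOpen G) {c : ℝ} (hc : c < (μ : Measure E).real G) :
    ∀ᶠ i in l, c < (μs i : Measure E).real G := by
  have real_compl (ν : FiniteMeasure E) :
      (ν : Measure E).real Gᶜ = ν.mass - (ν : Measure E).real G :=
    measureReal_compl hG.measurableSet
  obtain ⟨δ, hδ, hcδ⟩ : ∃ δ > 0, c + 2 * δ = (μ : Measure E).real G :=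
    ⟨((μ : Measure E).real G - c) / 2, by linarith, by ring⟩
  have hmass : ∀ᶠ i in l, (μ.mass : ℝ) - δ < (μs i).mass :=
    (NNReal.tendsto_coe.2 hμ.mass).eventually_const_lt (sub_lt_self _ hδ)
  have hcompl : ∀ᶠ i in l, (μs i : Measure E).real Gᶜ < (μ : Measure E).real Gᶜ + δ :=
    eventually_measureReal_lt_of_isClosed hμ hG.isClosed_compl (lt_add_of_pos_right _ hδ)
  filter_upwards [hmass, hcompl] with i hi_mass hi_compl
  rw [real_compl, real_compl] at hi_compl
  linarith

variable [l.NeBot]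

theorem liminf_measureReal_le_of_isClosed (hμ : Tendsto μs l (𝓝 μ)) {F : Set E}
    (hF : IsClosed F) :
    liminf (fun i => (μs i : Measure E).real F) l ≤ (μ : Measure E).real F :=
  le_of_forall_gt_imp_ge_of_dense fun _ hc => liminf_le_of_frequently_le
    ((eventually_measureReal_lt_of_isClosed hμ hF hc).mono fun _ => le_of_lt).frequently
    (isBoundedUnder_ge_measureReal μs F)

theorem measureReal_le_liminf_of_isOpen (hμ : Tendsto μs l (𝓝 μ)) {G : Set E} (hG : IsOpen G) :
    (μ : Measure E).real G ≤ liminf (fun i => (μs i : Measure E).real G) l :=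
  le_of_forall_lt_imp_le_of_dense fun _ hc => le_liminf_of_le
    (isBoundedUnder_le_measureReal hμ G).isCoboundedUnder_ge
    ((eventually_lt_measureReal_of_isOpen hμ hG hc).mono fun _ => le_of_lt)

theorem measureReal_le_liminf_of_subset_isOpen (hμ : Tendsto μs l (𝓝 μ)) {A G B : Set E}
    (hG : IsOpen G) (hAG : A ⊆ G) (hGB : G ⊆ B) :
    (μ : Measure E).real A ≤ liminf (fun i => (μs i : Measure E).real B) l :=
  calc (μ : Measure E).real A
      ≤ (μ : Measure E).real G := measureReal_mono hAG
    _ ≤ liminf (fun i => (μs i : Measure E).real G) l := measureReal_le_liminf_of_isOpen hμ hG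
    _ ≤ liminf (fun i => (μs i : Measure E).real B) l :=
      liminf_le_liminf (.of_forall fun _ => measureReal_mono hGB)
        (isBoundedUnder_ge_measureReal μs G)
        (isBoundedUnder_le_measureReal hμ B).isCoboundedUnder_ge

end Portmanteau

section Interlacing

variable {g h w : ℝ → ℝ} {a b : ℝ}

theorem mul_le_mul_of_lt_of_monotoneOn_mul (hw : ∀ r ∈ Ioo a b, 0 ≤ w r)
    (hwc : ContinuousOn w (Ioo a b)) (hwh : MonotoneOn (fun r => w r * h r) (Ioo a b))
    (hgh : ∀ s r, s < r → g s ≤ h r) {s r : ℝ} (hs : a < s) (hsr : s < r) (hr : r < b) :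
    w s * g s ≤ w r * h r := by
  have hws : Tendsto (fun t => w t * g s) (𝓝[>] s) (𝓝 (w s * g s)) :=
    ((hwc.continuousAt (Ioo_mem_nhds hs (hsr.trans hr))).tendsto.mono_left
      nhdsWithin_le_nhds).mul_const _
  refine le_of_tendsto hws ?_
  filter_upwards [Ioo_mem_nhdsGT hsr] with t ht
  have ht_mem : t ∈ Ioo a b := ⟨hs.trans ht.1, ht.2.trans hr⟩
  calc w t * g s
      ≤ w t * h t := mul_le_mul_of_nonneg_left (hgh s t ht.1) (hw t ht_mem)
    _ ≤ w r * h r := hwh ht_mem ⟨hs.trans hsr, hr⟩ ht.2.le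

theorem exists_tendsto_mul_of_interlacing (hab : a < b) (hw : ∀ r ∈ Ioo a b, 0 ≤ w r)
    (hwc : ContinuousOn w (Ioo a b)) (hwh : MonotoneOn (fun r => w r * h r) (Ioo a b))
    (hg : ∀ r, 0 ≤ g r) (hgh : ∀ s r, s < r → g s ≤ h r) (hhg : ∀ r, h r ≤ g r) :
    ∃ L, Tendsto (fun r => w r * g r) (𝓝[>] a) (𝓝 L) ∧
      Tendsto (fun r => w r * h r) (𝓝[>] a) (𝓝 L) := by
  have lower {s r : ℝ} (hs : a < s) (hsr : s < r) (hr : r < b) : w s * g s ≤ w r * h r :=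
    mul_le_mul_of_lt_of_monotoneOn_mul hw hwc hwh hgh hs hsr hr
  have upper {r : ℝ} (hr : r ∈ Ioo a b) : w r * h r ≤ w r * g r :=
    mul_le_mul_of_nonneg_left (hhg r) (hw r hr)
  have hwg : MonotoneOn (fun r => w r * g r) (Ioo a b) := by
    intro s hs r hr hsr
    rcases hsr.eq_or_lt with rfl | hsr
    · exact le_rfl
    · exact (lower hs.1 hsr hr.2).trans (upper hr)
  obtain ⟨L, hL⟩ : ∃ L, Tendsto (fun r => w r * g r) (𝓝[>] a) (𝓝 L) :=
    ⟨_, hwg.tendsto_nhdsWithin_Ioo_right (nonempty_Ioo.2 hab)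
      ⟨0, forall_mem_image.2 fun r hr => mul_nonneg (hw r hr) (hg r)⟩⟩
  refine ⟨L, hL, tendsto_of_tendsto_of_tendsto_of_le_of_le' tendsto_const_nhds hL ?_ ?_⟩
  · filter_upwards [Ioo_mem_nhdsGT hab] with r hr
    refine le_of_tendsto hL ?_
    filter_upwards [Ioo_mem_nhdsGT hr.1] with s hs
    exact lower hs.1 hs.2 hr.2
  · filter_upwards [Ioo_mem_nhdsGT hab] with r hr using upper hr

end Interlacing

theorem tendsto_nhdsGT_zero_of_exp_mul {f : ℝ → ℝ} {a L : ℝ}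
    (hf : Tendsto (fun r => Real.exp (a * r) * f r) (𝓝[>] 0) (𝓝 L)) :
    Tendsto f (𝓝[>] 0) (𝓝 L) := by
  have hexp : Tendsto (fun r => Real.exp (-(a * r))) (𝓝[>] 0) (𝓝 1) :=
    (Continuous.tendsto' (by fun_prop) 0 1 (by simp)).mono_left nhdsWithin_le_nhds
  simpa [← mul_assoc, ← Real.exp_add] using hexp.mul hf

section Density

variable {E ι : Type*} [PseudoMetricSpace E] [MeasurableSpace E] [OpensMeasurableSpace E]
  {l : Filter ι} [l.NeBot] {μs : ι → FiniteMeasure E} {μ : FiniteMeasure E}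

theorem exists_tendsto_mul_measureReal_closedBall {w : ℝ → ℝ} {r₀ : ℝ} (hr₀ : 0 < r₀)
    (hw : ∀ r ∈ Ioo 0 r₀, 0 ≤ w r) (hwc : ContinuousOn w (Ioo 0 r₀)) {x : E}
    (hmono : ∀ᶠ i in l,
      MonotoneOn (fun r => w r * (μs i : Measure E).real (closedBall x r)) (Ioo 0 r₀))
    (hμ : Tendsto μs l (𝓝 μ)) :
    ∃ L, Tendsto (fun r => w r * (μ : Measure E).real (closedBall x r)) (𝓝[>] 0) (𝓝 L) ∧
      Tendsto (fun r => w r * liminf (fun i => (μs i : Measure E).real (closedBall x r)) l)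
        (𝓝[>] 0) (𝓝 L) :=
  exists_tendsto_mul_of_interlacing hr₀ hw hwc
    (monotoneOn_mul_liminf hw (fun _ _ => isBoundedUnder_le_measureReal hμ _)
      (fun _ _ => isBoundedUnder_ge_measureReal μs _) hmono) (fun _ => measureReal_nonneg)
    (fun _ _ hsr => measureReal_le_liminf_of_subset_isOpen hμ isOpen_ball
      (closedBall_subset_ball hsr) ball_subset_closedBall)
    (fun _ => liminf_measureReal_le_of_isClosed hμ isClosed_closedBall)

theorem exists_density_tendsto_and_tendsto_liminf {p a r₀ : ℝ} (hr₀ : 0 < r₀) {x : E}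
    (hmono : ∀ᶠ i in l, MonotoneOn
      (fun r => Real.exp (a * r) * r ^ p * (μs i : Measure E).real (closedBall x r)) (Ioc 0 r₀))
    (hμ : Tendsto μs l (𝓝 μ)) :
    ∃ L, Tendsto (fun r => r ^ p * (μ : Measure E).real (closedBall x r)) (𝓝[>] 0) (𝓝 L) ∧
      Tendsto (fun r => liminf (fun i => r ^ p * (μs i : Measure E).real (closedBall x r)) l)
        (𝓝[>] 0) (𝓝 L) := by
  have weight_nonneg : ∀ r ∈ Ioo 0 r₀, 0 ≤ Real.exp (a * r) * r ^ p := fun r hr =>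
    mul_nonneg (Real.exp_pos _).le (Real.rpow_nonneg hr.1.le p)
  have weight_continuousOn : ContinuousOn (fun r => Real.exp (a * r) * r ^ p) (Ioo 0 r₀) :=
    (by fun_prop : Continuous fun r => Real.exp (a * r)).continuousOn.mul
      (continuousOn_id.rpow_const fun r hr => .inl hr.1.ne')
  obtain ⟨L, hlim, hliminf⟩ := exists_tendsto_mul_measureReal_closedBall hr₀ weight_nonneg
    weight_continuousOn (hmono.mono fun _ hi => hi.mono Ioo_subset_Ioc_self) hμ
  simp only [mul_assoc] at hlim hliminf
  refine ⟨L, tendsto_nhdsGT_zero_of_exp_mul hlim,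
    (tendsto_nhdsGT_zero_of_exp_mul hliminf).congr' ?_⟩
  filter_upwards [self_mem_nhdsWithin] with r hr
  exact (liminf_const_mul_of_nonneg (Real.rpow_nonneg (le_of_lt hr) p)
    (isBoundedUnder_le_measureReal hμ _) (isBoundedUnder_ge_measureReal μs _)).symm

theorem bubbling_set_recovered_from_limit_measure_general {p a r₀ : ℝ} (hr₀ : 0 < r₀)
    (hmono : ∀ x : E, ∀ᶠ i in l, MonotoneOn
      (fun r => Real.exp (a * r) * r ^ p * (μs i : Measure E).real (closedBall x r)) (Ioc 0 r₀))
    (hμ : Tendsto μs l (𝓝 μ)) :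
    ∃ Θ : E → ℝ,
      (∀ x,
        Tendsto (fun r => r ^ p * (μ : Measure E).real (closedBall x r)) (𝓝[>] 0) (𝓝 (Θ x)) ∧
        Tendsto (fun r => liminf (fun i => r ^ p * (μs i : Measure E).real (closedBall x r)) l)
          (𝓝[>] 0) (𝓝 (Θ x))) ∧
      ∀ ε : ℝ,
        {x | ∃ L, Tendsto
          (fun r => liminf (fun i => r ^ p * (μs i : Measure E).real (closedBall x r)) l)
          (𝓝[>] 0) (𝓝 L) ∧ ε ≤ L} = {x | ε ≤ Θ x} := by
  choose Θ hΘ using fun x => exists_density_tendsto_and_tendsto_liminf hr₀ (hmono x) hμ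
  refine ⟨Θ, hΘ, fun ε => Set.ext fun x => ⟨?_, fun hε => ⟨Θ x, (hΘ x).2, hε⟩⟩⟩
  rintro ⟨L, hL, hεL⟩
  exact hεL.trans_eq (tendsto_nhds_unique hL (hΘ x).2)

end Density

/-- If finite Borel measures `μᵢ` on `ℝⁿ`, each satisfying the
`(a, r₀)`-monotonicity property, converge weakly to `μ`, then at every point `x` the limit
`lim_{r → 0⁺} (liminf_i r^{4-n} μᵢ(closedBall x r))` exists and equals the density
`Θ^{n-4}(μ, x) = lim_{r → 0⁺} r^{4-n} μ(closedBall x r)`; consequently, for every `ε > 0`,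
the set where the former limit exists and is `≥ ε` coincides with `{x | Θ^{n-4}(μ, x) ≥ ε}`. -/
theorem bubbling_set_recovered_from_limit_measure
    (n : ℕ) (hn : 4 ≤ n) (a : ℝ) (ha : 0 ≤ a) (r₀ : ℝ) (hr₀ : 0 < r₀)
    (μs : ℕ → Measure (EuclideanSpace ℝ (Fin n))) (μ : Measure (EuclideanSpace ℝ (Fin n)))
    [∀ i, IsFiniteMeasure (μs i)] [IsFiniteMeasure μ]
    (hmono : ∀ i, ∀ x : EuclideanSpace ℝ (Fin n),
      MonotoneOn
        (fun r : ℝ => Real.exp (a * r) * r ^ ((4 : ℝ) - n) * (μs i (closedBall x r)).toReal)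
        (Ioc (0 : ℝ) r₀))
    (hweak : ∀ f : EuclideanSpace ℝ (Fin n) →ᵇ ℝ,
      Tendsto (fun i => ∫ y, f y ∂(μs i)) atTop (𝓝 (∫ y, f y ∂μ))) :
    ∃ Θ : EuclideanSpace ℝ (Fin n) → ℝ,
      (∀ x,
        Tendsto (fun r : ℝ => r ^ ((4 : ℝ) - n) * (μ (closedBall x r)).toReal)
          (𝓝[>] (0 : ℝ)) (𝓝 (Θ x)) ∧
        Tendsto
          (fun r : ℝ =>
            liminf (fun i => r ^ ((4 : ℝ) - n) * (μs i (closedBall x r)).toReal) atTop)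
          (𝓝[>] (0 : ℝ)) (𝓝 (Θ x))) ∧
      (∀ ε : ℝ, 0 < ε →
        {x : EuclideanSpace ℝ (Fin n) |
            ∃ L : ℝ,
              Tendsto
                (fun r : ℝ =>
                  liminf (fun i => r ^ ((4 : ℝ) - n) * (μs i (closedBall x r)).toReal) atTop)
                (𝓝[>] (0 : ℝ)) (𝓝 L) ∧ ε ≤ L}
          = {x : EuclideanSpace ℝ (Fin n) | ε ≤ Θ x}) := by
  obtain ⟨Θ, hΘ, hset⟩ := bubbling_set_recovered_from_limit_measure_general
    (μs := fun i => ⟨μs i, inferInstance⟩) (μ := ⟨μ, inferInstance⟩) hr₀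
    (fun x => .of_forall fun i => hmono i x)
    (FiniteMeasure.tendsto_iff_forall_integral_tendsto.2 hweak)
  exact ⟨Θ, hΘ, fun ε _ => hset ε⟩
end

section
/- Let n ≥ 4, a ≥ 0, r₀ > 0 and ε > 0. Let μ_i be a sequence of finite Borel measures on Euclidean space ℝⁿ, each satisfying the (a,r₀)-monotonicity property, converging weakly to a finite Borel measure μ. Let x_i → x in ℝⁿ be points with Θ^{n−4}(μ_i, x_i) ≥ ε for every i (these densities exist by monotonicity). Then the density Θ^{n−4}(μ, x) := lim_{r→0⁺} r^{4−n} μ(closedBall x r) exists and Θ^{n−4}(μ, x) ≥ ε. -/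
open MeasureTheory Metric Filter Set
open scoped Topology ENNReal BoundedContinuousFunction

/-!
Weak convergence `μᵢ → μ` and `xᵢ → x` give `μᵢ(closedBall xᵢ r) → μ(closedBall x r)` for every
radius `r` with `μ(sphere x r) = 0`, hence for all but countably many `r`. At these radii both the
monotonicity of `e^{ar} r^{-k} μᵢ(closedBall xᵢ r)` and its lower bound by the density at `xᵢ` pass
to the limit. Right continuity of `r ↦ μ(closedBall x r)` extends monotonicity to all small radii,
so the density of `μ` at `x` exists, and good radii tending to `0` bound it from below.
-/

section Dense

variable {α β : Type*} [LinearOrder α] [TopologicalSpace α] [OrderTopology α] [DenselyOrdered α]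

lemma nhdsWithin_inter_Ioi_neBot_of_dense {D : Set α} (hD : Dense D) {r b : α} (hrb : r < b) :
    (𝓝[D ∩ Ioi r] r).NeBot := by
  have mem_closure_Ioi : r ∈ closure (Ioi r) := closure_Ioi' ⟨b, hrb⟩ ▸ self_mem_Ici
  rw [← mem_closure_iff_nhdsWithin_neBot, inter_comm]
  exact closure_minimal (hD.open_subset_closure_inter isOpen_Ioi) isClosed_closure mem_closure_Ioi

lemma monotoneOn_Ioo_of_monotoneOn_dense_inter [Preorder β] [TopologicalSpace β]
    [OrderClosedTopology β] {F : α → β} {D : Set α} {a b : α} (hD : Dense D)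
    (hF : MonotoneOn F (D ∩ Ioo a b))
    (hcont : ∀ r ∈ Ioo a b, ContinuousWithinAt F (Ioi r) r) : MonotoneOn F (Ioo a b) := by
  intro r hr s hs hrs
  rcases hrs.eq_or_lt with rfl | hrs
  · exact le_rfl
  have tendsto_along_D {t : α} (ht : t ∈ Ioo a b) : Tendsto F (𝓝[D ∩ Ioi t] t) (𝓝 (F t)) :=
    (hcont t ht).mono inter_subset_right
  have eventually_mem_Ioo {t u : α} (htu : t < u) : ∀ᶠ t' in 𝓝[D ∩ Ioi t] t, t' ∈ D ∩ Ioo t u := by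
    filter_upwards [self_mem_nhdsWithin, mem_nhdsWithin_of_mem_nhds (Iio_mem_nhds htu)]
      with t' ht' htu'
    exact ⟨ht'.1, ht'.2, htu'⟩
  have := nhdsWithin_inter_Ioi_neBot_of_dense hD hr.2
  have := nhdsWithin_inter_Ioi_neBot_of_dense hD hs.2
  refine le_of_tendsto (tendsto_along_D hr) ?_
  filter_upwards [eventually_mem_Ioo hrs] with r' hr'
  refine ge_of_tendsto (tendsto_along_D hs) ?_
  filter_upwards [eventually_mem_Ioo hs.2] with s' hs'
  exact hF ⟨hr'.1, hr.1.trans hr'.2.1, hr'.2.2.trans hs.2⟩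
    ⟨hs'.1, hs.1.trans hs'.2.1, hs'.2.2⟩ (hr'.2.2.trans hs'.2.1).le

end Dense

section Sublevel

variable {X ι : Type*}

lemma sublevel_union_superlevel_eq_univ {α : Type*} [LinearOrder α] (g : X → α) (r : α) :
    {y | g y ≤ r} ∪ {y | r ≤ g y} = univ :=
  eq_univ_of_forall fun y => le_total (g y) r

variable [MeasurableSpace X]

lemma dense_setOf_measure_level_eq_zero (ν : Measure X) [SFinite ν] {g : X → ℝ}
    (hg : Measurable g) : Dense {r | ν {y | g y = r} = 0} := by
  simpa only [compl_ofPred, not_lt, nonpos_iff_eq_zero] using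
    (Measure.countable_meas_level_set_pos (μ := ν) hg).dense_compl ℝ

lemma continuousWithinAt_Ioi_measureReal_sublevel (ν : Measure X) [IsFiniteMeasure ν]
    {g : X → ℝ} (hg : Measurable g) (r : ℝ) :
    ContinuousWithinAt (fun s => ν.real {y | g y ≤ s}) (Ioi r) r := by
  have tendsto_measure := tendsto_measure_biInter_gt (μ := ν) (s := fun s => {y | g y ≤ s})
    (a := r) (fun s _ => (hg measurableSet_Iic).nullMeasurableSet)
    (fun _ _ _ hst _ hy => le_trans hy hst) ⟨r + 1, lt_add_one r, measure_ne_top _ _⟩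
  have inter_eq : ⋂ s > r, {y | g y ≤ s} = {y | g y ≤ r} := by
    ext y
    simpa only [mem_iInter, mem_ofPred_eq] using forall_gt_imp_ge_iff_le_of_dense
  rw [inter_eq] at tendsto_measure
  exact (ENNReal.tendsto_toReal (measure_ne_top _ _)).comp tendsto_measure

lemma measureReal_univ_le_sublevel_add_superlevel (ν : Measure X) (g : X → ℝ) (r : ℝ) :
    ν.real univ ≤ ν.real {y | g y ≤ r} + ν.real {y | r ≤ g y} :=
  sublevel_union_superlevel_eq_univ g r ▸ measureReal_union_le _ _

lemma measureReal_univ_eq_sublevel_add_superlevel {ν : Measure X} [IsFiniteMeasure ν]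
    {g : X → ℝ} (hg : Measurable g) {r : ℝ} (hr : ν {y | g y = r} = 0) :
    ν.real univ = ν.real {y | g y ≤ r} + ν.real {y | r ≤ g y} := by
  have ae_disjoint : AEDisjoint ν {y | g y ≤ r} {y | r ≤ g y} :=
    measure_mono_null (fun y hy => le_antisymm hy.1 hy.2) hr
  rw [← sublevel_union_superlevel_eq_univ g r,
    measureReal_union₀ (measurableSet_le measurable_const hg).nullMeasurableSet ae_disjoint]

variable [TopologicalSpace X] [HasOuterApproxClosed X] [OpensMeasurableSpace X]
  {L : Filter ι} {μs : ι → FiniteMeasure X} {μ : FiniteMeasure X} {gs : ι → X → ℝ} {g : X → ℝ}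

lemma eventually_measureReal_sublevel_lt (hμ : Tendsto μs L (𝓝 μ)) (hg : Continuous g)
    (hgs : TendstoUniformly gs g L) {r c : ℝ} (hc : (μ : Measure X).real {y | g y ≤ r} < c) :
    ∀ᶠ i in L, (μs i : Measure X).real {y | gs i y ≤ r} < c := by
  have right_continuous :=
    continuousWithinAt_Ioi_measureReal_sublevel (μ : Measure X) hg.measurable r
  obtain ⟨s, hsc, hrs⟩ :=
    ((right_continuous.eventually_lt_const hc).and self_mem_nhdsWithin).exists
  have limsup_lt : L.limsup (fun i => (μs i : Measure X) {y | g y ≤ s}) < ENNReal.ofReal c :=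
    (FiniteMeasure.limsup_measure_closed_le_of_tendsto hμ
      (isClosed_le hg continuous_const)).trans_lt
      ((ENNReal.lt_ofReal_iff_toReal_lt (measure_ne_top _ _)).2 hsc)
  filter_upwards [eventually_lt_of_limsup_lt limsup_lt,
    Metric.tendstoUniformly_iff.1 hgs (s - r) (sub_pos.2 hrs)] with i hi hdist
  have sublevel_subset : {y | gs i y ≤ r} ⊆ {y | g y ≤ s} := fun y (hy : gs i y ≤ r) => by
    have := (le_abs_self _).trans_lt (hdist y)
    exact (by linarith : g y ≤ s)
  exact (measureReal_mono sublevel_subset).trans_lt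
    ((ENNReal.lt_ofReal_iff_toReal_lt (measure_ne_top _ _)).1 hi)

lemma eventually_measureReal_superlevel_lt (hμ : Tendsto μs L (𝓝 μ)) (hg : Continuous g)
    (hgs : TendstoUniformly gs g L) {r c : ℝ} (hc : (μ : Measure X).real {y | r ≤ g y} < c) :
    ∀ᶠ i in L, (μs i : Measure X).real {y | r ≤ gs i y} < c := by
  simpa only [Pi.neg_apply, neg_le_neg_iff] using
    eventually_measureReal_sublevel_lt (r := -r) (c := c) hμ hg.neg hgs.neg
      (by simpa only [Pi.neg_apply, neg_le_neg_iff] using hc)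

lemma tendsto_measureReal_sublevel (hμ : Tendsto μs L (𝓝 μ)) (hg : Continuous g)
    (hgs : TendstoUniformly gs g L) {r : ℝ} (hr : (μ : Measure X) {y | g y = r} = 0) :
    Tendsto (fun i => (μs i : Measure X).real {y | gs i y ≤ r}) L
      (𝓝 ((μ : Measure X).real {y | g y ≤ r})) := by
  refine tendsto_order.2 ⟨fun c hc => ?_, fun c => eventually_measureReal_sublevel_lt hμ hg hgs⟩
  have mass_tendsto : Tendsto (fun i => (μs i : Measure X).real univ) L
      (𝓝 ((μ : Measure X).real univ)) :=
    (NNReal.continuous_coe.tendsto _).comp hμ.mass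
  obtain ⟨δ, hδ, hcδ⟩ : ∃ δ > 0, c + 2 * δ = (μ : Measure X).real {y | g y ≤ r} :=
    ⟨((μ : Measure X).real {y | g y ≤ r} - c) / 2, by linarith, by ring⟩
  filter_upwards [mass_tendsto.eventually_const_lt (sub_lt_self _ hδ),
    eventually_measureReal_superlevel_lt hμ hg hgs (lt_add_of_pos_right _ hδ)] with i hmass hsuper
  linarith [measureReal_univ_le_sublevel_add_superlevel (μs i : Measure X) (gs i) r,
    measureReal_univ_eq_sublevel_add_superlevel hg.measurable hr]

end Sublevel

section DensityRatio

variable {X ι : Type*} [PseudoMetricSpace X] [MeasurableSpace X]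

/-- The ratio `r^{-k} ν(closedBall x r)`, whose limit as `r → 0⁺` is the `k`-density of `ν` at `x`,
without the normalizing volume of the `k`-dimensional unit ball. -/
noncomputable def densityRatio (k : ℝ) (ν : Measure X) (x : X) (r : ℝ) : ℝ :=
  r ^ (-k) * ν.real (closedBall x r)

/-- The density ratio with the weight `e^{ar}`: the `(a, r₀)`-monotonicity property says that this
is nondecreasing for `r ∈ (0, r₀]`. -/
noncomputable def weightedDensityRatio (a k : ℝ) (ν : Measure X) (x : X) (r : ℝ) : ℝ :=
  Real.exp (a * r) * r ^ (-k) * ν.real (closedBall x r)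

variable {a k r₀ : ℝ}

lemma weightedDensityRatio_eq_exp_mul (ν : Measure X) (x : X) (r : ℝ) :
    weightedDensityRatio a k ν x r = Real.exp (a * r) * densityRatio k ν x r :=
  mul_assoc _ _ _

lemma weightedDensityRatio_nonneg (ν : Measure X) (x : X) {r : ℝ} (hr : 0 ≤ r) :
    0 ≤ weightedDensityRatio a k ν x r := by
  unfold weightedDensityRatio
  positivity

lemma tendsto_weightedDensityRatio_iff {ν : Measure X} {x : X} {Θ : ℝ} :
    Tendsto (weightedDensityRatio a k ν x) (𝓝[>] 0) (𝓝 Θ) ↔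
      Tendsto (densityRatio k ν x) (𝓝[>] 0) (𝓝 Θ) := by
  have tendsto_exp (b : ℝ) : Tendsto (fun r => Real.exp (b * r)) (𝓝[>] 0) (𝓝 1) := by
    have : Continuous fun r => Real.exp (b * r) := by fun_prop
    simpa using (this.tendsto 0).mono_left nhdsWithin_le_nhds
  constructor <;> intro h
  · refine (one_mul Θ ▸ (tendsto_exp (-a)).mul h).congr fun r => ?_
    rw [weightedDensityRatio_eq_exp_mul, ← mul_assoc, ← Real.exp_add]
    simp
  · exact (one_mul Θ ▸ (tendsto_exp a).mul h).congr fun r =>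
      (weightedDensityRatio_eq_exp_mul ν x r).symm

lemma density_le_weightedDensityRatio {ν : Measure X} {x : X}
    (hmono : MonotoneOn (weightedDensityRatio a k ν x) (Ioc 0 r₀)) {Θ : ℝ}
    (hΘ : Tendsto (densityRatio k ν x) (𝓝[>] 0) (𝓝 Θ)) {r : ℝ} (hr : r ∈ Ioc 0 r₀) :
    Θ ≤ weightedDensityRatio a k ν x r := by
  refine le_of_tendsto (tendsto_weightedDensityRatio_iff (a := a).2 hΘ) ?_
  filter_upwards [Ioo_mem_nhdsGT hr.1] with t ht
  exact hmono ⟨ht.1, ht.2.le.trans hr.2⟩ hr ht.2.le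

lemma exists_tendsto_densityRatio_of_monotoneOn {ν : Measure X} {x : X} (hr₀ : 0 < r₀)
    (hmono : MonotoneOn (weightedDensityRatio a k ν x) (Ioo 0 r₀)) :
    ∃ Θ, Tendsto (densityRatio k ν x) (𝓝[>] 0) (𝓝 Θ) := by
  have bddBelow : BddBelow (weightedDensityRatio a k ν x '' Ioo 0 r₀) :=
    ⟨0, forall_mem_image.2 fun _ hr => weightedDensityRatio_nonneg ν x hr.1.le⟩
  exact ⟨_, tendsto_weightedDensityRatio_iff.1
    (hmono.tendsto_nhdsWithin_Ioo_right (nonempty_Ioo.2 hr₀) bddBelow)⟩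

variable [OpensMeasurableSpace X]

lemma continuousWithinAt_Ioi_weightedDensityRatio (ν : Measure X) [IsFiniteMeasure ν] (x : X)
    {r : ℝ} (hr : 0 < r) : ContinuousWithinAt (weightedDensityRatio a k ν x) (Ioi r) r := by
  have weight_continuousAt : ContinuousAt (fun s => Real.exp (a * s) * s ^ (-k)) r :=
    ContinuousAt.mul (by fun_prop) (Real.continuousAt_rpow_const _ _ (.inl hr.ne'))
  exact weight_continuousAt.continuousWithinAt.mul
    (continuousWithinAt_Ioi_measureReal_sublevel ν (g := (dist · x)) (by fun_prop) r)

variable {L : Filter ι} {μs : ι → FiniteMeasure X} {μ : FiniteMeasure X} {xs : ι → X} {x : X}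

lemma tendsto_weightedDensityRatio_of_measure_sphere_eq_zero (hμ : Tendsto μs L (𝓝 μ))
    (hx : Tendsto xs L (𝓝 x)) {r : ℝ} (hr : (μ : Measure X) (sphere x r) = 0) :
    Tendsto (fun i => weightedDensityRatio a k (μs i) (xs i) r) L
      (𝓝 (weightedDensityRatio a k μ x r)) := by
  have dist_tendstoUniformly : TendstoUniformly (fun i y => dist y (xs i)) (dist · x) L := by
    refine Metric.tendstoUniformly_iff.2 fun δ hδ => ?_
    filter_upwards [Metric.tendsto_nhds.1 hx δ hδ] with i hi y
    calc dist (dist y x) (dist y (xs i)) ≤ dist x (xs i) := dist_dist_dist_le_right ..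
      _ < δ := by rwa [dist_comm]
  exact (tendsto_measureReal_sublevel hμ (by fun_prop) dist_tendstoUniformly hr).const_mul _

lemma dense_setOf_measure_sphere_eq_zero (ν : Measure X) [SFinite ν] (x : X) :
    Dense {r | ν (sphere x r) = 0} :=
  dense_setOf_measure_level_eq_zero ν (g := (dist · x)) (by fun_prop)

lemma monotoneOn_weightedDensityRatio_of_tendsto [L.NeBot] (hμ : Tendsto μs L (𝓝 μ))
    (hx : Tendsto xs L (𝓝 x))
    (hmono : ∀ i, MonotoneOn (weightedDensityRatio a k (μs i) (xs i)) (Ioo 0 r₀)) :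
    MonotoneOn (weightedDensityRatio a k μ x) (Ioo 0 r₀) := by
  refine monotoneOn_Ioo_of_monotoneOn_dense_inter
    (dense_setOf_measure_sphere_eq_zero (μ : Measure X) x) (fun r hr s hs hrs => ?_)
    fun r hr => continuousWithinAt_Ioi_weightedDensityRatio _ x hr.1
  exact le_of_tendsto_of_tendsto'
    (tendsto_weightedDensityRatio_of_measure_sphere_eq_zero hμ hx hr.1)
    (tendsto_weightedDensityRatio_of_measure_sphere_eq_zero hμ hx hs.1)
    fun i => hmono i hr.2 hs.2 hrs

theorem bubbling_points_accumulate_general [L.NeBot] {ε : ℝ} (hr₀ : 0 < r₀)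
    (hmono : ∀ i, MonotoneOn (weightedDensityRatio a k (μs i) (xs i)) (Ioc 0 r₀))
    (hμ : Tendsto μs L (𝓝 μ)) (hx : Tendsto xs L (𝓝 x))
    (hdens : ∀ i, ∃ Θi, Tendsto (densityRatio k (μs i) (xs i)) (𝓝[>] 0) (𝓝 Θi) ∧ ε ≤ Θi) :
    ∃ Θ, Tendsto (densityRatio k μ x) (𝓝[>] 0) (𝓝 Θ) ∧ ε ≤ Θ := by
  have hmono_lim : MonotoneOn (weightedDensityRatio a k μ x) (Ioo 0 r₀) :=
    monotoneOn_weightedDensityRatio_of_tendsto hμ hx fun i => (hmono i).mono Ioo_subset_Ioc_self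
  obtain ⟨Θ, hΘ⟩ := exists_tendsto_densityRatio_of_monotoneOn hr₀ hmono_lim
  have le_at_good_radius {r : ℝ} (hr : r ∈ Ioc 0 r₀) (hsphere : (μ : Measure X) (sphere x r) = 0) :
      ε ≤ weightedDensityRatio a k μ x r := by
    refine ge_of_tendsto' (tendsto_weightedDensityRatio_of_measure_sphere_eq_zero hμ hx hsphere)
      fun i => ?_
    obtain ⟨Θi, hΘi, hεΘi⟩ := hdens i
    exact hεΘi.trans (density_le_weightedDensityRatio (hmono i) hΘi hr)
  have := nhdsWithin_inter_Ioi_neBot_of_dense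
    (dense_setOf_measure_sphere_eq_zero (μ : Measure X) x) hr₀
  have hΘ_good_radii : Tendsto (weightedDensityRatio a k μ x)
      (𝓝[{r | (μ : Measure X) (sphere x r) = 0} ∩ Ioi 0] 0) (𝓝 Θ) :=
    (tendsto_weightedDensityRatio_iff.2 hΘ).mono_left (nhdsWithin_mono 0 inter_subset_right)
  refine ⟨Θ, hΘ, ge_of_tendsto hΘ_good_radii ?_⟩
  filter_upwards [self_mem_nhdsWithin, mem_nhdsWithin_of_mem_nhds (Iio_mem_nhds hr₀)] with r hr hr'
  exact le_at_good_radius ⟨hr.2, (mem_Iio.1 hr').le⟩ hr.1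

end DensityRatio

/-- Let `μᵢ` be finite Borel measures on `ℝⁿ` satisfying the
`(a, r₀)`-monotonicity property and converging weakly to `μ`, and let `xᵢ → x` with
`Θ^{n-4}(μᵢ, xᵢ) ≥ ε` for all `i` (the densities exist by monotonicity). Then the density
`Θ^{n-4}(μ, x) = lim_{r → 0⁺} r^{4-n} μ(closedBall x r)` exists and is `≥ ε`:
bubbling points can only accumulate at bubbling points of the limit measure. -/
theorem bubbling_points_accumulate
    (n : ℕ) (hn : 4 ≤ n) (a : ℝ) (ha : 0 ≤ a) (r₀ : ℝ) (hr₀ : 0 < r₀) (ε : ℝ) (hε : 0 < ε)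
    (μs : ℕ → Measure (EuclideanSpace ℝ (Fin n))) (μ : Measure (EuclideanSpace ℝ (Fin n)))
    [∀ i, IsFiniteMeasure (μs i)] [IsFiniteMeasure μ]
    (hmono : ∀ i, ∀ x : EuclideanSpace ℝ (Fin n),
      MonotoneOn
        (fun r : ℝ => Real.exp (a * r) * r ^ ((4 : ℝ) - n) * (μs i (closedBall x r)).toReal)
        (Ioc (0 : ℝ) r₀))
    (hweak : ∀ f : EuclideanSpace ℝ (Fin n) →ᵇ ℝ,
      Tendsto (fun i => ∫ y, f y ∂(μs i)) atTop (𝓝 (∫ y, f y ∂μ)))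
    (xs : ℕ → EuclideanSpace ℝ (Fin n)) (x : EuclideanSpace ℝ (Fin n))
    (hx : Tendsto xs atTop (𝓝 x))
    (hdens : ∀ i, ∃ Θi : ℝ,
      Tendsto (fun r : ℝ => r ^ ((4 : ℝ) - n) * (μs i (closedBall (xs i) r)).toReal)
        (𝓝[>] (0 : ℝ)) (𝓝 Θi) ∧ ε ≤ Θi) :
    ∃ Θ : ℝ,
      Tendsto (fun r : ℝ => r ^ ((4 : ℝ) - n) * (μ (closedBall x r)).toReal)
        (𝓝[>] (0 : ℝ)) (𝓝 Θ) ∧ ε ≤ Θ := by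
  simp only [← neg_sub (n : ℝ) 4] at hmono hdens ⊢
  exact bubbling_points_accumulate_general
    (μs := fun i => ⟨μs i, inferInstance⟩) (μ := ⟨μ, inferInstance⟩) hr₀ (fun i => hmono i (xs i))
    (FiniteMeasure.tendsto_iff_forall_integral_tendsto.2 hweak) hx hdens
end

section
/- Let n ≥ 4, a ≥ 0, r₀ > 0, let μ be a finite Borel measure on Euclidean space ℝⁿ, and let x₀ ∈ ℝⁿ be such that r ↦ e^{a r} r^{4−n} μ(closedBall x₀ r) is nondecreasing on (0, r₀]; set Θ := lim_{r→0⁺} r^{4−n} μ(closedBall x₀ r). Let λ_j → 0⁺ and define the blow-up measures ν_j := λ_j^{4−n} · (T_j)_*μ, where T_j : ℝⁿ → ℝⁿ is T_j(y) = λ_j^{−1}(y − x₀). Suppose the ν_j converge vaguely to a Borel measure η that is finite on compact sets, i.e. ∫ f dν_j → ∫ f dη for every continuous compactly supported f : ℝⁿ → ℝ. Then η(closedBall 0 σ) = Θ · σ^{n−4} for every σ > 0; in particular σ^{4−n} η(closedBall 0 σ) is independent of σ and equals the density Θ of μ at x₀. -/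
open MeasureTheory Metric Filter Set
open scoped Topology ENNReal

/-!
The blow-up at scale `r` gives `closedBall 0 σ` the mass `r ^ (-d) * μ (closedBall x₀ (r * σ))`,
which is `σ ^ d` times the density ratio of `μ` at scale `r * σ` and so tends to `Θ * σ ^ d`.
A vague limit `η` satisfies `limsup ν_i K ≤ η K` for compact `K`, which bounds `η (closedBall 0 σ)`
below by `Θ * σ ^ d`, and `η K ≤ liminf ν_i U` for open `U ⊇ K`, which bounds it above by
`Θ * t ^ d` for every `t > σ`. Letting `t` decrease to `σ` closes the gap.
-/

/-- Vague convergence of the measures `ν i` to `η` along `l`: convergence of the integrals of all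
continuous compactly supported real functions. As the Bochner integral of a non-integrable function
is `0`, this is meaningful only for measures that are finite on compact sets. -/
def VagueTendsto {X ι : Type*} [TopologicalSpace X] [MeasurableSpace X]
    (ν : ι → Measure X) (l : Filter ι) (η : Measure X) : Prop :=
  ∀ f : X → ℝ, Continuous f → HasCompactSupport f →
    Tendsto (fun i => ∫ x, f x ∂ν i) l (𝓝 (∫ x, f x ∂η))

namespace VagueTendsto

variable {X ι : Type*} [MeasurableSpace X] {ν : ι → Measure X} {l : Filter ι} [l.NeBot]
  {η : Measure X}

section LocallyCompact

variable [TopologicalSpace X] [LocallyCompactSpace X] [R1Space X] [BorelSpace X] {K U : Set X}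

theorem measure_le_liminf_of_isCompact_of_isOpen [IsFiniteMeasureOnCompacts η]
    (h : VagueTendsto ν l η) (hK : IsCompact K) (hU : IsOpen U) (hKU : K ⊆ U) :
    η K ≤ liminf (fun i => ν i U) l := by
  obtain ⟨f, hfK, hfU, hf, hf01⟩ := exists_continuous_one_zero_of_isCompact hK
    hU.isClosed_compl (disjoint_compl_right_iff_subset.2 hKU)
  calc
    η K ≤ ENNReal.ofReal (∫ x, f x ∂η) :=
      (f.continuous.integrable_of_hasCompactSupport hf).measure_le_integral
        (.of_forall fun x => (hf01 x).1) fun x hx => (hfK hx).ge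
    _ = liminf (fun i => ENNReal.ofReal (∫ x, f x ∂ν i)) l :=
      (ENNReal.tendsto_ofReal (h f f.continuous hf)).liminf_eq.symm
    _ ≤ liminf (fun i => ν i U) l := liminf_le_liminf <| .of_forall fun i =>
      integral_le_measure (fun x _ => (hf01 x).2) fun x hx => (hfU hx).le

theorem limsup_measure_le_of_isCompact [η.OuterRegular]
    (h : VagueTendsto ν l η) (hν : ∀ᶠ i in l, IsFiniteMeasureOnCompacts (ν i))
    (hK : IsCompact K) : limsup (fun i => ν i K) l ≤ η K := by
  rw [K.measure_eq_iInf_isOpen]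
  refine le_iInf₂ fun U hKU => le_iInf fun hU => ?_
  obtain ⟨f, hfK, hfU, hf, hf01⟩ := exists_continuous_one_zero_of_isCompact hK
    hU.isClosed_compl (disjoint_compl_right_iff_subset.2 hKU)
  calc
    limsup (fun i => ν i K) l ≤ limsup (fun i => ENNReal.ofReal (∫ x, f x ∂ν i)) l :=
      limsup_le_limsup <| hν.mono fun i _ =>
        (f.continuous.integrable_of_hasCompactSupport hf).measure_le_integral
          (.of_forall fun x => (hf01 x).1) fun x hx => (hfK hx).ge
    _ = ENNReal.ofReal (∫ x, f x ∂η) :=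
      (ENNReal.tendsto_ofReal (h f f.continuous hf)).limsup_eq
    _ ≤ η U := integral_le_measure (fun x _ => (hf01 x).2) fun x hx => (hfU hx).le

end LocallyCompact

theorem measure_closedBall_eq_of_tendsto [PseudoMetricSpace X] [ProperSpace X] [BorelSpace X]
    [IsFiniteMeasureOnCompacts η] (h : VagueTendsto ν l η)
    (hν : ∀ᶠ i in l, IsFiniteMeasureOnCompacts (ν i)) {x : X} {σ : ℝ} {m : ℝ → ℝ≥0∞}
    (hm : ∀ t, σ ≤ t → Tendsto (fun i => ν i (closedBall x t)) l (𝓝 (m t)))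
    (hmσ : ContinuousWithinAt m (Ioi σ) σ) : η (closedBall x σ) = m σ := by
  have le_of_gt : ∀ t ∈ Ioi σ, η (closedBall x σ) ≤ m t := fun t ht => calc
    η (closedBall x σ) ≤ liminf (fun i => ν i (ball x t)) l :=
      h.measure_le_liminf_of_isCompact_of_isOpen (isCompact_closedBall x σ) isOpen_ball
        (closedBall_subset_ball ht)
    _ ≤ liminf (fun i => ν i (closedBall x t)) l :=
      liminf_le_liminf <| .of_forall fun i => measure_mono ball_subset_closedBall
    _ = m t := (hm t (mem_Ioi.1 ht).le).liminf_eq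
  refine le_antisymm (ge_of_tendsto hmσ (eventually_mem_nhdsWithin.mono le_of_gt)) ?_
  rw [← (hm σ le_rfl).limsup_eq]
  exact h.limsup_measure_le_of_isCompact hν (isCompact_closedBall x σ)

end VagueTendsto

section BlowUp

variable {E : Type*} [NormedAddCommGroup E] [NormedSpace ℝ E] [MeasurableSpace E]

/-- The `d`-dimensional blow-up of `μ` at `x₀` to scale `r > 0`: the image of `μ` under
`y ↦ r⁻¹ • (y - x₀)`, multiplied by `r ^ (-d)`. Its limits as `r → 0⁺` are the tangent measures of
`μ` at `x₀`. The exponent `d` is real, so that `n - 4` is not truncated. -/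
noncomputable def blowUpMeasure (μ : Measure E) (x₀ : E) (d r : ℝ) : Measure E :=
  ENNReal.ofReal (r ^ (-d)) • μ.map fun y => r⁻¹ • (y - x₀)

variable [BorelSpace E] {μ : Measure E} {x₀ : E} {d r σ Θ : ℝ}

theorem isFiniteMeasureOnCompacts_blowUpMeasure [IsFiniteMeasureOnCompacts μ] (hr : r ≠ 0) :
    IsFiniteMeasureOnCompacts (blowUpMeasure μ x₀ d r) :=
  have : IsFiniteMeasureOnCompacts (μ.map fun y => r⁻¹ • (y - x₀)) :=
    Measure.IsFiniteMeasureOnCompacts.map μ <|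
      (Homeomorph.subRight x₀).trans (Homeomorph.smulOfNeZero r⁻¹ (inv_ne_zero hr))
  IsFiniteMeasureOnCompacts.smul _ ENNReal.ofReal_ne_top

theorem blowUpMeasure_closedBall (hr : 0 < r) :
    blowUpMeasure μ x₀ d r (closedBall 0 σ) =
      ENNReal.ofReal (r ^ (-d)) * μ (closedBall x₀ (r * σ)) := by
  have preimage_eq : (fun y => r⁻¹ • (y - x₀)) ⁻¹' closedBall 0 σ = closedBall x₀ (r * σ) := by
    ext y
    rw [mem_preimage, mem_closedBall_zero_iff, mem_closedBall, dist_eq_norm, norm_smul,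
      norm_inv, Real.norm_of_nonneg hr.le, inv_mul_le_iff₀ hr]
  have measurable_rescale : Measurable fun y => r⁻¹ • (y - x₀) :=
    Continuous.measurable (by fun_prop)
  rw [blowUpMeasure, Measure.smul_apply, smul_eq_mul,
    Measure.map_apply measurable_rescale measurableSet_closedBall, preimage_eq]

variable [ProperSpace E] [IsFiniteMeasureOnCompacts μ]

theorem blowUpMeasure_closedBall_eq_ofReal_density_ratio (hr : 0 < r) (hσ : 0 < σ) :
    blowUpMeasure μ x₀ d r (closedBall 0 σ) =
      ENNReal.ofReal ((r * σ) ^ (-d) * μ.real (closedBall x₀ (r * σ)) * σ ^ d) := by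
  have scale_eq : r ^ (-d) = (r * σ) ^ (-d) * σ ^ d := by
    rw [Real.mul_rpow hr.le hσ.le, mul_assoc, ← Real.rpow_add hσ, neg_add_cancel,
      Real.rpow_zero, mul_one]
  rw [blowUpMeasure_closedBall hr, mul_right_comm, ← scale_eq,
    ENNReal.ofReal_mul (Real.rpow_nonneg hr.le _), ofReal_measureReal measure_closedBall_lt_top.ne]

theorem tendsto_blowUpMeasure_closedBall
    (hΘ : Tendsto (fun r : ℝ => r ^ (-d) * μ.real (closedBall x₀ r)) (𝓝[>] 0) (𝓝 Θ))
    (hσ : 0 < σ) :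
    Tendsto (fun r => blowUpMeasure μ x₀ d r (closedBall 0 σ)) (𝓝[>] 0)
      (𝓝 (ENNReal.ofReal (Θ * σ ^ d))) := by
  have tendsto_scale : Tendsto (fun r => r * σ) (𝓝[>] 0) (𝓝[>] 0) := by
    simpa only [mul_comm] using tendsto_iff_comap.2 (comap_mulLeft_nhdsGT_zero hσ).ge
  refine (ENNReal.tendsto_ofReal ((hΘ.comp tendsto_scale).mul_const (σ ^ d))).congr' ?_
  filter_upwards [self_mem_nhdsWithin] with r hr
  exact (blowUpMeasure_closedBall_eq_ofReal_density_ratio hr hσ).symm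

theorem tangent_measure_conical_mass_general {ι : Type*} {l : Filter ι} [l.NeBot] {lam : ι → ℝ}
    {η : Measure E} [IsFiniteMeasureOnCompacts η]
    (hΘ : Tendsto (fun r : ℝ => r ^ (-d) * μ.real (closedBall x₀ r)) (𝓝[>] 0) (𝓝 Θ))
    (hlam : Tendsto lam l (𝓝[>] 0))
    (hη : VagueTendsto (fun i => blowUpMeasure μ x₀ d (lam i)) l η) (hσ : 0 < σ) :
    η.real (closedBall 0 σ) = Θ * σ ^ d := by
  have blowUp_finite : ∀ᶠ i in l, IsFiniteMeasureOnCompacts (blowUpMeasure μ x₀ d (lam i)) :=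
    (hlam.eventually self_mem_nhdsWithin).mono fun i hi =>
      isFiniteMeasureOnCompacts_blowUpMeasure (mem_Ioi.1 hi).ne'
  have cone_mass_continuousAt : ContinuousAt (fun t => ENNReal.ofReal (Θ * t ^ d)) σ :=
    ENNReal.continuous_ofReal.continuousAt.comp
      ((Real.continuousAt_rpow_const σ d (.inl hσ.ne')).const_mul Θ)
  have density_nonneg : 0 ≤ Θ := by
    refine ge_of_tendsto hΘ ?_
    filter_upwards [self_mem_nhdsWithin] with r hr
    exact mul_nonneg (Real.rpow_nonneg (mem_Ioi.1 hr).le _) measureReal_nonneg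
  rw [measureReal_def, hη.measure_closedBall_eq_of_tendsto blowUp_finite
    (fun t ht => (tendsto_blowUpMeasure_closedBall hΘ (hσ.trans_le ht)).comp hlam)
    cone_mass_continuousAt.continuousWithinAt,
    ENNReal.toReal_ofReal (mul_nonneg density_nonneg (Real.rpow_nonneg hσ.le d))]

end BlowUp

/-- tangent cone measures have conical mass ratios. Let `μ` be a finite
Borel measure on `ℝⁿ` whose scaled mass `r ↦ e^{a r} r^{4-n} μ(closedBall x₀ r)` is
nondecreasing on `(0, r₀]`, with density `Θ = lim_{r → 0⁺} r^{4-n} μ(closedBall x₀ r)`.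
If the blow-up measures `ν_j = λ_j^{4-n} (T_j)_* μ`, `T_j(y) = λ_j⁻¹ (y - x₀)`, converge
vaguely (against continuous compactly supported functions) to a measure `η` finite on
compacts, then `η(closedBall 0 σ) = Θ · σ^{n-4}` for every `σ > 0`. -/
theorem tangent_measure_conical_mass
    (n : ℕ) (hn : 4 ≤ n) (a : ℝ) (ha : 0 ≤ a) (r₀ : ℝ) (hr₀ : 0 < r₀)
    (μ : Measure (EuclideanSpace ℝ (Fin n))) [IsFiniteMeasure μ]
    (x₀ : EuclideanSpace ℝ (Fin n))
    (hmono : MonotoneOn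
      (fun r : ℝ => Real.exp (a * r) * r ^ ((4 : ℝ) - n) * (μ (closedBall x₀ r)).toReal)
      (Ioc (0 : ℝ) r₀))
    (Θ : ℝ)
    (hΘ : Tendsto (fun r : ℝ => r ^ ((4 : ℝ) - n) * (μ (closedBall x₀ r)).toReal)
      (𝓝[>] (0 : ℝ)) (𝓝 Θ))
    (lam : ℕ → ℝ) (hlam_pos : ∀ j, 0 < lam j) (hlam : Tendsto lam atTop (𝓝 (0 : ℝ)))
    (η : Measure (EuclideanSpace ℝ (Fin n))) [IsFiniteMeasureOnCompacts η]
    (hvague : ∀ f : EuclideanSpace ℝ (Fin n) → ℝ, Continuous f → HasCompactSupport f →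
      Tendsto
        (fun j => ∫ y, f y
          ∂(ENNReal.ofReal ((lam j) ^ ((4 : ℝ) - n)) •
            Measure.map (fun y : EuclideanSpace ℝ (Fin n) => (lam j)⁻¹ • (y - x₀)) μ))
        atTop (𝓝 (∫ y, f y ∂η))) :
    ∀ σ : ℝ, 0 < σ → (η (closedBall 0 σ)).toReal = Θ * σ ^ ((n : ℝ) - 4) := by
  rw [← neg_sub (n : ℝ) 4] at hΘ hvague
  exact fun σ hσ => tangent_measure_conical_mass_general hΘ
    (tendsto_nhdsWithin_iff.2 ⟨hlam, .of_forall hlam_pos⟩) hvague hσ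
end

section
/- Let n ≥ 4 and let η be a Borel measure on Euclidean space ℝⁿ that is finite on compact sets. Suppose that for every smooth compactly supported function ψ : ℝⁿ → ℝ one has ∫ ( (n−4)·ψ(x) + ⟨x, ∇ψ(x)⟩ ) dη(x) = 0. Then η is a cone measure of degree n−4: for every λ > 0 and every Borel set E ⊆ ℝⁿ, η({λ·x : x ∈ E}) = λ^{n−4} · η(E). -/
open MeasureTheory Metric Filter Set
open scoped Topology ENNReal RealInnerProductSpace

/-!
For a test function `ψ`, put `I t = ∫ x, ψ (exp t • x) ∂η`. Applying the hypothesis to the test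
function `ψ (exp t • ·)` turns differentiation under the integral sign into the equation
`I' = -d * I`, so that `exp (d * t) * I t` is constant. Hence `c ^ d` times the image of `η` under
the dilation by `c` has the same integrals as `η` against test functions. Test functions are dense
in `L¹(μ + ν)` for any two measures `μ`, `ν` finite on compact sets, so they determine such
measures.
-/

open scoped ContDiff Pointwise

section ParametricIntegral

variable {X G : Type*} [TopologicalSpace X] [R1Space X] [MeasurableSpace X] [OpensMeasurableSpace X]
  [NormedAddCommGroup G] [NormedSpace ℝ G]

theorem hasDerivAt_integral_of_eventually_eq_zero_off_compact {μ : Measure X}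
    [IsFiniteMeasureOnCompacts μ] {F F' : ℝ → X → G} {K : Set X} {t₀ : ℝ} (hK : IsCompact K)
    (hF : ∀ t, Continuous (F t)) (hF' : Continuous fun p : ℝ × X ↦ F' p.1 p.2)
    (hderiv : ∀ t x, HasDerivAt (F · x) (F' t x) t)
    (hzero : ∀ᶠ t in 𝓝 t₀, ∀ x ∉ K, F t x = 0) :
    HasDerivAt (fun t ↦ ∫ x, F t x ∂μ) (∫ x, F' t₀ x ∂μ) t₀ := by
  obtain ⟨ε, hε, hzero⟩ := eventually_nhds_iff_ball.1 hzero
  have hzero' : ∀ t ∈ ball t₀ ε, ∀ x ∉ K, F' t x = 0 := fun t ht x hx ↦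
    (hderiv t x).unique <| (hasDerivAt_const t (0 : G)).congr_of_eventuallyEq <|
      (isOpen_ball.eventually_mem ht).mono fun s hs ↦ hzero s hs x hx
  have hint : ∀ t ∈ ball t₀ ε, Integrable (F t) μ := fun t ht ↦
    (hF t).integrable_of_hasCompactSupport <| .intro hK (hzero t ht)
  have hint' : Integrable (F' t₀) μ :=
    (hF'.comp (Continuous.prodMk_right t₀)).integrable_of_hasCompactSupport <|
      .intro hK (hzero' t₀ (mem_ball_self hε))
  obtain ⟨C, hC⟩ := ((isCompact_closedBall t₀ ε).prod hK.closure).exists_bound_of_continuousOn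
    hF'.continuousOn
  have hbound : ∀ x, ∀ t ∈ ball t₀ ε, ‖F' t x‖ ≤ (closure K).indicator (fun _ ↦ C) x := by
    intro x t ht
    by_cases hx : x ∈ closure K
    · simpa only [indicator_of_mem hx] using hC (t, x) ⟨ball_subset_closedBall ht, hx⟩
    · simp [hx, hzero' t ht x (notMem_subset subset_closure hx)]
  have hbound_int : Integrable ((closure K).indicator fun _ ↦ C) μ :=
    (integrableOn_const hK.closure.measure_lt_top.ne).integrable_indicator
      isClosed_closure.measurableSet
  exact (hasDerivAt_integral_of_dominated_loc_of_deriv_le (ball_mem_nhds t₀ hε)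
    (eventually_of_mem (ball_mem_nhds t₀ hε) fun t ht ↦ (hint t ht).aestronglyMeasurable)
    (hint t₀ (mem_ball_self hε)) hint'.aestronglyMeasurable (.of_forall hbound) hbound_int
    (.of_forall fun x t _ ↦ hderiv t x)).2

end ParametricIntegral

section Dilation

variable {E G : Type*} [NormedAddCommGroup E] [NormedSpace ℝ E]
  [NormedAddCommGroup G] [NormedSpace ℝ G]

theorem hasDerivAt_comp_exp_smul {ψ : E → G} (hψ : Differentiable ℝ ψ) (x : E) (t : ℝ) :
    HasDerivAt (fun s : ℝ ↦ ψ (Real.exp s • x))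
      (fderiv ℝ ψ (Real.exp t • x) (Real.exp t • x)) t :=
  (hψ _).hasFDerivAt.comp_hasDerivAt t ((Real.hasDerivAt_exp t).smul_const x)

theorem continuous_fderiv_apply_self {ψ : E → G} (hψ : ContDiff ℝ 1 ψ) :
    Continuous fun x ↦ fderiv ℝ ψ x x :=
  (hψ.continuous_fderiv one_ne_zero).clm_apply continuous_id

variable [MeasurableSpace E] [OpensMeasurableSpace E] {η : Measure E} [IsFiniteMeasureOnCompacts η]

theorem integrable_fderiv_apply_self {ψ : E → G} (hψ : ContDiff ℝ 1 ψ)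
    (hψc : HasCompactSupport ψ) : Integrable (fun x ↦ fderiv ℝ ψ x x) η :=
  (continuous_fderiv_apply_self hψ).integrable_of_hasCompactSupport <|
    (hψc.fderiv ℝ).mono fun x hx hzero ↦ hx (by simp [hzero])

theorem hasDerivAt_integral_comp_exp_smul {ψ : E → G} (hψ : ContDiff ℝ 1 ψ)
    (hψc : HasCompactSupport ψ) (t : ℝ) :
    HasDerivAt (fun s : ℝ ↦ ∫ x, ψ (Real.exp s • x) ∂η)
      (∫ x, fderiv ℝ ψ (Real.exp t • x) (Real.exp t • x) ∂η) t := by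
  let K : Set E := (fun p : ℝ × E ↦ Real.exp (-p.1) • p.2) '' (closedBall t 1 ×ˢ tsupport ψ)
  have hK : IsCompact K := ((isCompact_closedBall t 1).prod hψc).image (by fun_prop)
  have hzero : ∀ᶠ s in 𝓝 t, ∀ x ∉ K, ψ (Real.exp s • x) = 0 := by
    filter_upwards [closedBall_mem_nhds t one_pos] with s hs x hx
    refine image_eq_zero_of_notMem_tsupport fun hmem ↦ hx ?_
    exact ⟨(s, Real.exp s • x), ⟨hs, hmem⟩, by simp [smul_smul, ← Real.exp_add]⟩
  exact hasDerivAt_integral_of_eventually_eq_zero_off_compact hK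
    (fun s ↦ hψ.continuous.comp (continuous_const_smul _))
    ((continuous_fderiv_apply_self hψ).comp
      (by fun_prop : Continuous fun p : ℝ × E ↦ Real.exp p.1 • p.2))
    (fun s x ↦ hasDerivAt_comp_exp_smul (hψ.differentiable one_ne_zero) x s) hzero

end Dilation

section TestFunctions

theorem enorm_integral_sub_integral_le_eLpNorm {X G : Type*} [MeasurableSpace X]
    [NormedAddCommGroup G] [NormedSpace ℝ G] {μ : Measure X} {f g : X → G} (hf : Integrable f μ)
    (hg : Integrable g μ) : ‖∫ x, f x ∂μ - ∫ x, g x ∂μ‖ₑ ≤ eLpNorm (f - g) 1 μ := by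
  rw [← integral_sub hf hg, eLpNorm_one_eq_lintegral_enorm]
  exact enorm_integral_le_lintegral_enorm _

variable {E : Type*} [NormedAddCommGroup E] [NormedSpace ℝ E] [FiniteDimensional ℝ E]
  [MeasurableSpace E] [BorelSpace E] {μ ν : Measure E} [IsFiniteMeasureOnCompacts μ]
  [IsFiniteMeasureOnCompacts ν]

theorem integral_eq_of_forall_contDiff_integral_eq
    (h : ∀ ψ : E → ℝ, ContDiff ℝ ∞ ψ → HasCompactSupport ψ → ∫ x, ψ x ∂μ = ∫ x, ψ x ∂ν)
    {f : E → ℝ} (hf : Continuous f) (hfc : HasCompactSupport f) :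
    ∫ x, f x ∂μ = ∫ x, f x ∂ν := by
  have : IsFiniteMeasureOnCompacts (μ + ν) :=
    ⟨fun K hK ↦ ENNReal.add_lt_top.2 ⟨hK.measure_lt_top, hK.measure_lt_top⟩⟩
  refine eq_of_forall_dist_le fun ε hε ↦ ?_
  obtain ⟨g, hgc, hg, hfg⟩ := hfc.exist_eLpNorm_sub_le_of_continuous (μ + ν) (p := 1) hε hf
  have hdist (ρ : Measure E) [IsFiniteMeasureOnCompacts ρ] :=
    enorm_integral_sub_integral_le_eLpNorm (hf.integrable_of_hasCompactSupport (μ := ρ) hfc)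
      (hg.continuous.integrable_of_hasCompactSupport hgc)
  rw [← ENNReal.ofReal_le_ofReal_iff hε.le, ← edist_dist]
  calc edist (∫ x, f x ∂μ) (∫ x, f x ∂ν)
      ≤ edist (∫ x, f x ∂μ) (∫ x, g x ∂μ) + edist (∫ x, f x ∂ν) (∫ x, g x ∂ν) := by
        rw [h g hg hgc]
        exact edist_triangle_right _ _ _
    _ ≤ eLpNorm (f - g) 1 μ + eLpNorm (f - g) 1 ν := by
        simpa only [edist_eq_enorm_sub] using add_le_add (hdist μ) (hdist ν)
    _ = eLpNorm (f - g) 1 (μ + ν) := (eLpNorm_one_add_measure _ _ _).symm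
    _ ≤ ENNReal.ofReal ε := hfg

theorem measure_eq_of_forall_contDiff_integral_eq
    (h : ∀ ψ : E → ℝ, ContDiff ℝ ∞ ψ → HasCompactSupport ψ → ∫ x, ψ x ∂μ = ∫ x, ψ x ∂ν) :
    μ = ν :=
  Measure.ext_of_integral_eq_on_compactlySupported fun f ↦
    integral_eq_of_forall_contDiff_integral_eq h f.continuous f.hasCompactSupport

end TestFunctions

section WeakHomogeneity

variable {E : Type*} [NormedAddCommGroup E] [NormedSpace ℝ E] [MeasurableSpace E]

/-- Weak form of Euler's identity for a measure `η` homogeneous of degree `d`, i.e. the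
infinitesimal version of `η (c • S) = c ^ d * η S`. The Euler vector field acts on a test function
`ψ` as `fderiv ℝ ψ x x`, which is `⟪x, ∇ψ x⟫` in an inner product space. -/
def IsWeaklyHomogeneous (η : Measure E) (d : ℝ) : Prop :=
  ∀ ψ : E → ℝ, ContDiff ℝ ∞ ψ → HasCompactSupport ψ → ∫ x, (d * ψ x + fderiv ℝ ψ x x) ∂η = 0

namespace IsWeaklyHomogeneous

variable [OpensMeasurableSpace E] {η : Measure E} [IsFiniteMeasureOnCompacts η] {d : ℝ} {ψ : E → ℝ}

theorem integral_fderiv_apply_self (hη : IsWeaklyHomogeneous η d) (hψ : ContDiff ℝ ∞ ψ)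
    (hψc : HasCompactSupport ψ) : ∫ x, fderiv ℝ ψ x x ∂η = -d * ∫ x, ψ x ∂η := by
  have hsum := hη ψ hψ hψc
  rw [integral_add ((hψ.continuous.integrable_of_hasCompactSupport hψc).const_mul d)
    (integrable_fderiv_apply_self (hψ.of_le (by simp)) hψc), integral_const_mul] at hsum
  linarith

theorem integral_fderiv_smul_apply_smul (hη : IsWeaklyHomogeneous η d) (hψ : ContDiff ℝ ∞ ψ)
    (hψc : HasCompactSupport ψ) {c : ℝ} (hc : c ≠ 0) :
    ∫ x, fderiv ℝ ψ (c • x) (c • x) ∂η = -d * ∫ x, ψ (c • x) ∂η := by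
  simpa [fderiv_comp_smul] using
    hη.integral_fderiv_apply_self (ψ := fun x ↦ ψ (c • x)) (hψ.comp (contDiff_const_smul c))
      (hψc.comp_smul hc)

theorem exp_mul_integral_comp_exp_smul (hη : IsWeaklyHomogeneous η d) (hψ : ContDiff ℝ ∞ ψ)
    (hψc : HasCompactSupport ψ) (t : ℝ) :
    Real.exp (d * t) * ∫ x, ψ (Real.exp t • x) ∂η = ∫ x, ψ x ∂η := by
  have hderiv (s : ℝ) :
      HasDerivAt (fun s ↦ Real.exp (d * s) * ∫ x, ψ (Real.exp s • x) ∂η) 0 s := by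
    have hI := hasDerivAt_integral_comp_exp_smul (η := η) (hψ.of_le (by simp)) hψc s
    rw [hη.integral_fderiv_smul_apply_smul hψ hψc (Real.exp_ne_zero s)] at hI
    exact (((hasDerivAt_id s).const_mul d).exp.mul hI).congr_deriv (by simp only [id]; ring)
  simpa using is_const_of_deriv_eq_zero (fun s ↦ (hderiv s).differentiableAt)
    (fun s ↦ (hderiv s).deriv) t 0

theorem rpow_mul_integral_comp_smul (hη : IsWeaklyHomogeneous η d) (hψ : ContDiff ℝ ∞ ψ)
    (hψc : HasCompactSupport ψ) {c : ℝ} (hc : 0 < c) :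
    c ^ d * ∫ x, ψ (c • x) ∂η = ∫ x, ψ x ∂η := by
  simpa [Real.exp_log hc, Real.rpow_def_of_pos hc, mul_comm d] using
    hη.exp_mul_integral_comp_exp_smul hψ hψc (Real.log c)

end IsWeaklyHomogeneous

end WeakHomogeneity

section Homogeneity

variable {E : Type*} [NormedAddCommGroup E] [NormedSpace ℝ E] [FiniteDimensional ℝ E]
  [MeasurableSpace E] [BorelSpace E] {η : Measure E} [IsFiniteMeasureOnCompacts η] {d : ℝ}

theorem IsWeaklyHomogeneous.smul_map_smul_eq (hη : IsWeaklyHomogeneous η d) {c : ℝ} (hc : 0 < c) :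
    ENNReal.ofReal (c ^ d) • η.map (c • ·) = η := by
  have : IsFiniteMeasureOnCompacts (η.map (c • · : E → E)) :=
    (Measure.Regular.map (μ := η) (Homeomorph.smulOfNeZero c hc.ne')).toIsFiniteMeasureOnCompacts
  have : IsFiniteMeasureOnCompacts (ENNReal.ofReal (c ^ d) • η.map (c • ·)) :=
    .smul _ ENNReal.ofReal_ne_top
  refine measure_eq_of_forall_contDiff_integral_eq fun ψ hψ hψc ↦ ?_
  calc ∫ x, ψ x ∂(ENNReal.ofReal (c ^ d) • η.map (c • ·))
      = c ^ d * ∫ x, ψ (c • x) ∂η := by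
        rw [integral_smul_measure, (measurableEmbedding_const_smul₀ hc.ne').integral_map,
          ENNReal.toReal_ofReal (by positivity), smul_eq_mul]
    _ = ∫ x, ψ x ∂η := hη.rpow_mul_integral_comp_smul hψ hψc hc

theorem dilation_invariance_criterion_cone_measure_general
    (hη : IsWeaklyHomogeneous η d) {c : ℝ} (hc : 0 < c) (S : Set E) :
    η (c • S) = ENNReal.ofReal (c ^ d) * η S := by
  calc η (c • S) = (ENNReal.ofReal (c ^ d) • η.map (c • ·)) (c • S) := by
        rw [hη.smul_map_smul_eq hc]
    _ = ENNReal.ofReal (c ^ d) * η ((c • ·) ⁻¹' (c • S)) := by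
        rw [Measure.smul_apply, (measurableEmbedding_const_smul₀ hc.ne').map_apply, smul_eq_mul]
    _ = ENNReal.ofReal (c ^ d) * η S := by
        rw [preimage_smul₀ hc.ne', inv_smul_smul₀ hc.ne']

end Homogeneity

/-- cone measure criterion. Let `η` be a Borel measure on `ℝⁿ` (`n ≥ 4`)
finite on compact sets such that `∫ ((n-4) ψ(x) + ⟨x, ∇ψ(x)⟩) dη(x) = 0` for every smooth
compactly supported `ψ`. Then `η` is a cone measure of degree `n - 4`:
`η(λ·E) = λ^{n-4} η(E)` for every `λ > 0` and Borel `E`. -/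
theorem dilation_invariance_criterion_cone_measure
    (n : ℕ) (hn : 4 ≤ n)
    (η : Measure (EuclideanSpace ℝ (Fin n))) [IsFiniteMeasureOnCompacts η]
    (hdil : ∀ ψ : EuclideanSpace ℝ (Fin n) → ℝ, ContDiff ℝ (⊤ : ℕ∞) ψ → HasCompactSupport ψ →
      ∫ x, (((n : ℝ) - 4) * ψ x + ⟪x, gradient ψ x⟫) ∂η = 0) :
    ∀ lam : ℝ, 0 < lam → ∀ E : Set (EuclideanSpace ℝ (Fin n)), MeasurableSet E →
      η ((fun x : EuclideanSpace ℝ (Fin n) => lam • x) '' E)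
        = ENNReal.ofReal (lam ^ ((n : ℝ) - 4)) * η E := by
  exact fun lam hlam E _ ↦ dilation_invariance_criterion_cone_measure_general
    (fun ψ hψ hψc ↦ by simpa [inner_gradient_right] using hdil ψ hψ hψc) hlam E
end

section
/- Let n ≥ 4, a ≥ 0, c₀ ≥ 0. There exist constants ε₀ > 0 and C > 0, depending only on n, a and c₀, with the following property. Let x₀ ∈ ℝⁿ, 0 < r ≤ 1, and let u : ℝⁿ → ℝ be a C² function, nonnegative on ball x₀ r, satisfying the differential inequality Δu ≥ −c₀·(u^{3/2} + u) pointwise on ball x₀ r, and such that for every y ∈ ball x₀ (r/2) the function s ↦ e^{a s} s^{4−n} ∫_{ball y s} u d(vol) is nondecreasing on (0, r/2]. If r^{4−n} ∫_{ball x₀ r} u d(vol) ≤ ε₀², then sup_{x ∈ ball x₀ (r/4)} u(x) ≤ C · r^{−4} · ( r^{4−n} ∫_{ball x₀ r} u d(vol) ). -/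
open MeasureTheory Metric Filter Set
open scoped Topology ENNReal

/-- The Euclidean Laplacian of `u : ℝⁿ → ℝ` at `x`: the trace of the second derivative,
`Δu(x) = ∑ i ∂²u/∂xᵢ²(x)`, computed via the iterated Fréchet derivative evaluated on the
standard orthonormal basis of `EuclideanSpace ℝ (Fin n)`. -/
noncomputable def euclideanLaplacian {n : ℕ}
    (u : EuclideanSpace ℝ (Fin n) → ℝ) (x : EuclideanSpace ℝ (Fin n)) : ℝ :=
  ∑ i : Fin n,
    iteratedFDeriv ℝ 2 u x ![EuclideanSpace.single i (1 : ℝ), EuclideanSpace.single i (1 : ℝ)]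

/-!
Averages with weight `k(z) = (1 - ‖z‖²)₊` are well suited to the Laplacian: since
`∇(k²)(z) = -4 k(z) z`, integration by parts gives
`d/dt ∫ u(y + t z) k(z) dz = (t/4) ∫ Δu(y + t z) k(z)² dz`, hence a mean value inequality for
functions with `Δu ≥ -L`, the error being `L s² / 8` at scale `s`.

Choose `y` maximizing `u(x) (R - |x - x₀|)⁴`, where `R = r/2`, and put `d = R - |y - x₀|`. On the
ball of radius `d/2` about `y` we have `u ≤ 16 u(y)`, so there the nonlinear inequality becomes
`Δu ≥ -16 K u(y)` with `K` of the order of `√u(y) + 1`. At the scale `s ≤ d/2` with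
`s⁻² = 4 (d⁻² + K)` the mean value error is at most `u(y)/2`, whence `u(y)` is bounded by
`s⁻⁴` times the scaled energy at `(y, s)`, which monotonicity bounds by the energy at `(x₀, r)`.
After multiplication by `d⁴`, the contribution of `K² ≲ u(y) + 1` is a small multiple of
`u(y) d⁴` if the energy is small, and is absorbed.
-/

open InnerProductSpace Laplacian Module

lemma hasDerivAt_max_zero_sq (x : ℝ) :
    HasDerivAt (fun x : ℝ => max x 0 ^ 2) (2 * max x 0) x := by
  have off_zero : ∀ y ≠ (0 : ℝ), HasDerivAt (fun x : ℝ => max x 0 ^ 2) (2 * max y 0) y := by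
    intro y hy
    rcases hy.lt_or_gt with hneg | hpos
    · rw [max_eq_right hneg.le, mul_zero]
      refine (hasDerivAt_const y (0 : ℝ)).congr_of_eventuallyEq ?_
      filter_upwards [gt_mem_nhds hneg] with x hx
      simp [max_eq_right hx.le]
    · rw [max_eq_left hpos.le]
      refine (by simpa using hasDerivAt_pow 2 y : HasDerivAt (· ^ 2) (2 * y) y)
        |>.congr_of_eventuallyEq ?_
      filter_upwards [lt_mem_nhds hpos] with x hx
      rw [max_eq_left hx.le]
  rcases eq_or_ne x 0 with rfl | hx
  · exact hasDerivAt_of_hasDerivAt_of_ne off_zero (by fun_prop) (by fun_prop)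
  · exact off_zero x hx

section Kernel

variable {E : Type*} [NormedAddCommGroup E]

/-- The Epanechnikov kernel `(1 - ‖z‖²)₊`, not normalized. It is the weight in all averages below:
up to a constant, the gradient of its square is `z` times the kernel itself. -/
noncomputable def epanechnikov (z : E) : ℝ := max (1 - ‖z‖ ^ 2) 0

lemma continuous_epanechnikov : Continuous (epanechnikov (E := E)) := by
  unfold epanechnikov
  fun_prop

lemma epanechnikov_nonneg (z : E) : 0 ≤ epanechnikov z := le_max_right _ _

lemma epanechnikov_le_one (z : E) : epanechnikov z ≤ 1 :=
  max_le (sub_le_self _ (by positivity)) zero_le_one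

lemma epanechnikov_eq_zero_of_one_le_norm {z : E} (hz : 1 ≤ ‖z‖) : epanechnikov z = 0 :=
  max_eq_right (sub_nonpos.2 (one_le_pow₀ hz))

lemma hasCompactSupport_epanechnikov [ProperSpace E] :
    HasCompactSupport (epanechnikov (E := E)) := by
  refine HasCompactSupport.intro (isCompact_closedBall 0 1) fun z hz => ?_
  rw [mem_closedBall_zero_iff, not_le] at hz
  exact epanechnikov_eq_zero_of_one_le_norm hz.le

variable [InnerProductSpace ℝ E]

lemma hasFDerivAt_epanechnikov_sq (z : E) :
    HasFDerivAt (fun z : E => epanechnikov z ^ 2) ((-4 * epanechnikov z) • innerSL ℝ z) z := by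
  have inner_deriv : HasFDerivAt (fun z : E => 1 - ‖z‖ ^ 2) (-(2 • innerSL ℝ z)) z := by
    simpa using (hasStrictFDerivAt_norm_sq z).hasFDerivAt.const_sub 1
  refine ((hasDerivAt_max_zero_sq _).comp_hasFDerivAt z inner_deriv).congr_fderiv ?_
  ext v
  simp only [epanechnikov, smul_apply, neg_apply,
    smul_eq_mul, nsmul_eq_mul, Nat.cast_ofNat]
  ring

variable [FiniteDimensional ℝ E] [MeasurableSpace E] [BorelSpace E]

lemma integrable_mul_epanechnikov {f : E → ℝ} (hf : Continuous f) :
    Integrable (fun z => f z * epanechnikov z) :=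
  (hf.mul continuous_epanechnikov).integrable_of_hasCompactSupport
    hasCompactSupport_epanechnikov.mul_left

lemma integrable_mul_epanechnikov_sq {f : E → ℝ} (hf : Continuous f) :
    Integrable (fun z => f z * epanechnikov z ^ 2) := by
  have hfk : Continuous fun z => f z * epanechnikov z := hf.mul continuous_epanechnikov
  simpa only [pow_two, mul_assoc] using integrable_mul_epanechnikov hfk

variable (E) in
lemma integral_epanechnikov_pos : 0 < ∫ z : E, epanechnikov z :=
  continuous_epanechnikov.integral_pos_of_hasCompactSupport_nonneg_nonzero (x := 0)
    hasCompactSupport_epanechnikov epanechnikov_nonneg (by simp [epanechnikov])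

variable (E) in
lemma integral_epanechnikov_sq_le :
    ∫ z : E, epanechnikov z ^ 2 ≤ ∫ z : E, epanechnikov z := by
  refine integral_mono (by simpa using integrable_mul_epanechnikov_sq (E := E) continuous_one)
    (by simpa using integrable_mul_epanechnikov (E := E) continuous_one) fun z => ?_
  exact pow_le_of_le_one (epanechnikov_nonneg z) (epanechnikov_le_one z) two_ne_zero

lemma integral_mul_inner_mul_epanechnikov {f : E → ℝ} (hf : ContDiff ℝ 1 f) (v : E) :
    ∫ z, f z * inner ℝ z v * epanechnikov z =
      1 / 4 * ∫ z, fderiv ℝ f z v * epanechnikov z ^ 2 := by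
  have hf_cont : Continuous f := hf.continuous
  have hf'_cont : Continuous (fun z => fderiv ℝ f z v) :=
    (hf.continuous_fderiv one_ne_zero).clm_apply continuous_const
  have mul_fderiv_sq (z : E) : f z * fderiv ℝ (fun z => epanechnikov z ^ 2) z v =
      -4 * (f z * inner ℝ z v * epanechnikov z) := by
    rw [(hasFDerivAt_epanechnikov_sq z).fderiv, smul_apply,
      innerSL_apply_apply, smul_eq_mul]
    ring
  have by_parts := integral_mul_fderiv_eq_neg_fderiv_mul_of_integrable (μ := volume)
    (integrable_mul_epanechnikov_sq hf'_cont)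
    (by simpa only [mul_fderiv_sq]
      using (integrable_mul_epanechnikov (by fun_prop)).const_mul (-4))
    (integrable_mul_epanechnikov_sq hf_cont)
    (fun z _ => hf.differentiable one_ne_zero z)
    (fun z _ => (hasFDerivAt_epanechnikov_sq z).differentiableAt)
  simp only [mul_fderiv_sq, integral_const_mul] at by_parts
  linarith

lemma integral_apply_self_mul_epanechnikov {ι : Type*} [Fintype ι] (b : OrthonormalBasis ι ℝ E)
    {ω : E → E →L[ℝ] ℝ} (hω : ContDiff ℝ 1 ω) :
    ∫ z, ω z z * epanechnikov z =
      1 / 4 * ∫ z, (∑ i, fderiv ℝ ω z (b i) (b i)) * epanechnikov z ^ 2 := by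
  have hω_cont : Continuous ω := hω.continuous
  have : Continuous (fderiv ℝ ω) := hω.continuous_fderiv one_ne_zero
  have expand (T : E →L[ℝ] ℝ) (z : E) : T z = ∑ i, T (b i) * inner ℝ z (b i) := by
    conv_lhs => rw [← b.sum_repr' z, map_sum]
    simp [real_inner_comm, mul_comm]
  have fderiv_component (i : ι) (z : E) :
      fderiv ℝ (fun z => ω z (b i)) z (b i) = fderiv ℝ ω z (b i) (b i) := by
    rw [fderiv_clm_apply (hω.differentiable one_ne_zero z) (differentiableAt_const _)]
    simp
  simp only [fun z => expand (ω z) z, Finset.sum_mul]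
  rw [integral_finsetSum, integral_finsetSum, Finset.mul_sum]
  · refine Finset.sum_congr rfl fun i _ => ?_
    rw [integral_mul_inner_mul_epanechnikov (hω.clm_apply contDiff_const)]
    simp only [fderiv_component]
  · exact fun i _ => integrable_mul_epanechnikov_sq (by fun_prop)
  · exact fun i _ => integrable_mul_epanechnikov (by fun_prop)

end Kernel

lemma hasDerivAt_integral_comp_smul_mul {E : Type*} [NormedAddCommGroup E] [NormedSpace ℝ E]
    [MeasurableSpace E] [OpensMeasurableSpace E] {μ : Measure E} [IsFiniteMeasureOnCompacts μ]
    {u k : E → ℝ} (hu : ContDiff ℝ 1 u) (hk : Continuous k) (hk_supp : HasCompactSupport k)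
    (y : E) (t : ℝ) :
    HasDerivAt (fun t : ℝ => ∫ z, u (y + t • z) * k z ∂μ)
      (∫ z, fderiv ℝ u (y + t • z) z * k z ∂μ) t := by
  have hu_cont : Continuous u := hu.continuous
  have : Continuous (fderiv ℝ u) := hu.continuous_fderiv one_ne_zero
  have integrable_mul {f : E → ℝ} (hf : Continuous f) : Integrable (fun z => f z * k z) μ :=
    (hf.mul hk).integrable_of_hasCompactSupport hk_supp.mul_left
  obtain ⟨B, hB⟩ := ((isCompact_closedBall t 1).prod hk_supp.isCompact).exists_bound_of_continuousOn
    (f := fun p : ℝ × E => fderiv ℝ u (y + p.1 • p.2) p.2) (by fun_prop)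
  have deriv_bound (z : E) (τ : ℝ) (hτ : τ ∈ closedBall t 1) :
      ‖fderiv ℝ u (y + τ • z) z * k z‖ ≤ B * ‖k z‖ := by
    by_cases hz : z ∈ tsupport k
    · rw [norm_mul]
      gcongr
      exact hB (τ, z) ⟨hτ, hz⟩
    · simp [image_eq_zero_of_notMem_tsupport hz]
  have pointwise_deriv (z : E) (τ : ℝ) :
      HasDerivAt (fun τ : ℝ => u (y + τ • z) * k z) (fderiv ℝ u (y + τ • z) z * k z) τ := by
    have line : HasDerivAt (fun τ : ℝ => y + τ • z) z τ := by
      simpa using ((hasDerivAt_id τ).smul_const z).const_add y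
    exact ((hu.differentiable one_ne_zero _).hasFDerivAt.comp_hasDerivAt τ line).mul_const _
  exact (hasDerivAt_integral_of_dominated_loc_of_deriv_le
    (closedBall_mem_nhds t one_pos)
    (.of_forall fun τ => (integrable_mul (by fun_prop)).aestronglyMeasurable)
    (integrable_mul (by fun_prop))
    (integrable_mul (by fun_prop)).aestronglyMeasurable
    (.of_forall deriv_bound)
    ((hk.integrable_of_hasCompactSupport hk_supp).norm.const_mul B)
    (.of_forall fun z τ _ => pointwise_deriv z τ)).2

lemma add_smul_mem_ball {E : Type*} [SeminormedAddCommGroup E] [NormedSpace ℝ E] {y z : E}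
    {t s : ℝ} (ht : 0 ≤ t) (hts : t ≤ s) (hs : 0 < s) (hz : ‖z‖ < 1) : y + t • z ∈ ball y s := by
  rw [mem_ball_iff_norm, add_sub_cancel_left, norm_smul, Real.norm_of_nonneg ht]
  calc t * ‖z‖ ≤ s * ‖z‖ := by gcongr
    _ < s := mul_lt_of_lt_one_right hs hz

section Laplacian

variable {E : Type*} [NormedAddCommGroup E] [InnerProductSpace ℝ E] [FiniteDimensional ℝ E]
  {u : E → ℝ} {y : E} {s L : ℝ}

lemma laplacian_eq_sum_fderiv_fderiv {ι : Type*} [Fintype ι] (b : OrthonormalBasis ι ℝ E)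
    (u : E → ℝ) (x : E) : Δ u x = ∑ i, fderiv ℝ (fderiv ℝ u) x (b i) (b i) := by
  simp [laplacian_eq_iteratedFDeriv_orthonormalBasis u b, iteratedFDeriv_two_apply]

lemma continuous_laplacian (hu : ContDiff ℝ 2 u) : Continuous (Δ u) := by
  have : Continuous (fderiv ℝ (fderiv ℝ u)) :=
    (hu.fderiv_right (m := 1) (by norm_num)).continuous_fderiv one_ne_zero
  simp only [funext (laplacian_eq_sum_fderiv_fderiv (stdOrthonormalBasis ℝ E) u)]
  fun_prop

variable [MeasurableSpace E] [BorelSpace E]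

-- The derivative of the average is the flux of `∇u` against `z • k(z) = -∇(k²)(z) / 4`.
lemma hasDerivAt_integral_comp_smul_mul_epanechnikov (hu : ContDiff ℝ 2 u) (y : E) (t : ℝ) :
    HasDerivAt (fun t : ℝ => ∫ z, u (y + t • z) * epanechnikov z)
      (t / 4 * ∫ z, Δ u (y + t • z) * epanechnikov z ^ 2) t := by
  have hu' : ContDiff ℝ 1 (fderiv ℝ u) := hu.fderiv_right (by norm_num)
  have rescaled : ContDiff ℝ 1 fun z : E => fderiv ℝ u (y + t • z) := hu'.comp (by fun_prop)
  have fderiv_rescaled (z : E) : fderiv ℝ (fun z => fderiv ℝ u (y + t • z)) z =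
      t • fderiv ℝ (fderiv ℝ u) (y + t • z) := by
    have affine : HasFDerivAt (fun z : E => y + t • z) (t • ContinuousLinearMap.id ℝ E) z :=
      ((hasFDerivAt_id z).const_smul t).const_add y
    have := (hu'.differentiable one_ne_zero _).hasFDerivAt.comp z affine
    simpa [Function.comp_def] using this.fderiv
  refine (hasDerivAt_integral_comp_smul_mul (hu.of_le one_le_two) continuous_epanechnikov
    hasCompactSupport_epanechnikov y t).congr_deriv ?_
  rw [integral_apply_self_mul_epanechnikov (stdOrthonormalBasis ℝ E) rescaled]
  simp only [fderiv_rescaled, smul_apply, smul_eq_mul,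
    ← Finset.mul_sum, mul_assoc, integral_const_mul,
    ← laplacian_eq_sum_fderiv_fderiv (stdOrthonormalBasis ℝ E) u]
  ring

lemma monotoneOn_integral_comp_smul_mul_epanechnikov_add (hu : ContDiff ℝ 2 u)
    (hΔ : ∀ x ∈ ball y s, -L ≤ Δ u x) :
    MonotoneOn (fun t : ℝ => (∫ z, u (y + t • z) * epanechnikov z) +
      L / 8 * (∫ z : E, epanechnikov z ^ 2) * t ^ 2) (Icc 0 s) := by
  have laplacian_integral_ge {t : ℝ} (ht : t ∈ Ioo 0 s) :
      -L * ∫ z : E, epanechnikov z ^ 2 ≤ ∫ z, Δ u (y + t • z) * epanechnikov z ^ 2 := by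
    have hΔ_cont : Continuous (Δ u) := continuous_laplacian hu
    rw [← integral_const_mul]
    refine integral_mono (integrable_mul_epanechnikov_sq continuous_const)
      (integrable_mul_epanechnikov_sq (by fun_prop)) fun z => ?_
    rcases lt_or_ge ‖z‖ 1 with hz | hz
    · have := hΔ _ (add_smul_mem_ball ht.1.le ht.2.le (ht.1.trans ht.2) hz)
      dsimp only
      gcongr
    · simp [epanechnikov_eq_zero_of_one_le_norm hz]
  have hderiv (t : ℝ) : HasDerivAt (fun t : ℝ => (∫ z, u (y + t • z) * epanechnikov z) +
      L / 8 * (∫ z : E, epanechnikov z ^ 2) * t ^ 2)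
      (t / 4 * ((∫ z, Δ u (y + t • z) * epanechnikov z ^ 2) +
        L * ∫ z : E, epanechnikov z ^ 2)) t := by
    refine ((hasDerivAt_integral_comp_smul_mul_epanechnikov hu y t).add
      ((hasDerivAt_pow 2 t).const_mul (L / 8 * ∫ z : E, epanechnikov z ^ 2))).congr_deriv ?_
    push_cast
    ring
  refine monotoneOn_of_deriv_nonneg (convex_Icc 0 s)
    (fun t _ => (hderiv t).continuousAt.continuousWithinAt)
    (fun t _ => (hderiv t).differentiableAt.differentiableWithinAt) fun t ht => ?_
  rw [interior_Icc] at ht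
  rw [(hderiv t).deriv]
  exact mul_nonneg (by linarith [ht.1]) (by linarith [laplacian_integral_ge ht])

lemma integral_comp_smul_mul_epanechnikov_le (hu : Continuous u) (hs : 0 < s)
    (hnonneg : ∀ x ∈ ball y s, 0 ≤ u x) :
    ∫ z, u (y + s • z) * epanechnikov z ≤ (s ^ finrank ℝ E)⁻¹ * ∫ z in ball y s, u z := by
  have rescale : (s ^ finrank ℝ E)⁻¹ * ∫ z in ball y s, u z =
      ∫ z in ball (0 : E) 1, u (y + s • z) := by
    have translate : ∫ z in ball (0 : E) s, u (y + z) = ∫ z in ball y s, u z := by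
      rw [← (measurePreserving_add_left volume y).setIntegral_preimage_emb
        (measurableEmbedding_addLeft y) u (ball y s), preimage_add_ball, sub_self]
    rw [Measure.setIntegral_comp_smul_of_pos volume (fun z => u (y + z)) _ hs,
      smul_unitBall_of_pos hs, translate, smul_eq_mul]
  have integrand_vanishes : ∀ z ∉ ball (0 : E) 1, u (y + s • z) * epanechnikov z = 0 := by
    intro z hz
    rw [mem_ball_zero_iff, not_lt] at hz
    rw [epanechnikov_eq_zero_of_one_le_norm hz, mul_zero]
  rw [rescale, ← setIntegral_eq_integral_of_forall_compl_eq_zero integrand_vanishes]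
  refine setIntegral_mono_on (integrable_mul_epanechnikov (by fun_prop)).integrableOn
    ((by fun_prop : Continuous fun z => u (y + s • z)).continuousOn.integrableOn_compact
      (isCompact_closedBall 0 1) |>.mono_set ball_subset_closedBall)
    measurableSet_ball fun z hz => ?_
  exact mul_le_of_le_one_right
    (hnonneg _ (add_smul_mem_ball hs.le le_rfl hs (mem_ball_zero_iff.1 hz)))
    (epanechnikov_le_one z)

lemma mul_integral_epanechnikov_le_of_neg_le_laplacian (hu : ContDiff ℝ 2 u) (hs : 0 < s)
    (hL : 0 ≤ L) (hnonneg : ∀ x ∈ ball y s, 0 ≤ u x) (hΔ : ∀ x ∈ ball y s, -L ≤ Δ u x) :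
    u y * ∫ z : E, epanechnikov z ≤ (s ^ finrank ℝ E)⁻¹ * (∫ z in ball y s, u z) +
      L * s ^ 2 / 8 * ∫ z : E, epanechnikov z := by
  have mono := monotoneOn_integral_comp_smul_mul_epanechnikov_add hu hΔ
    (left_mem_Icc.2 hs.le) (right_mem_Icc.2 hs.le) hs.le
  simp only [zero_smul, add_zero, integral_const_mul, ne_eq, OfNat.ofNat_ne_zero,
    not_false_eq_true, zero_pow, mul_zero] at mono
  calc u y * ∫ z : E, epanechnikov z
      ≤ (∫ z, u (y + s • z) * epanechnikov z) +
          L * s ^ 2 / 8 * ∫ z : E, epanechnikov z ^ 2 := by linarith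
    _ ≤ _ := add_le_add (integral_comp_smul_mul_epanechnikov_le hu.continuous hs hnonneg)
      (mul_le_mul_of_nonneg_left (integral_epanechnikov_sq_le E) (by positivity))

end Laplacian

lemma le_exp_abs_mul_of_monotoneOn_exp_mul {f : ℝ → ℝ} {a s ρ : ℝ}
    (hmono : MonotoneOn (fun s => Real.exp (a * s) * f s) (Ioc 0 ρ)) (hs : s ∈ Ioc 0 ρ)
    (hf : 0 ≤ f ρ) : f s ≤ Real.exp (|a| * ρ) * f ρ := by
  have hρ : ρ ∈ Ioc 0 ρ := ⟨hs.1.trans_le hs.2, le_rfl⟩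
  have exponent_le : a * ρ - a * s ≤ |a| * ρ := by
    linarith [mul_le_mul_of_nonneg_right (le_abs_self a) (sub_nonneg.2 hs.2),
      mul_nonneg (abs_nonneg a) hs.1.le]
  calc f s = Real.exp (-(a * s)) * (Real.exp (a * s) * f s) := by
        rw [← mul_assoc, ← Real.exp_add, neg_add_cancel, Real.exp_zero, one_mul]
    _ ≤ Real.exp (-(a * s)) * (Real.exp (a * ρ) * f ρ) :=
        mul_le_mul_of_nonneg_left (hmono hs hρ hs.2) (Real.exp_pos _).le
    _ = Real.exp (a * ρ - a * s) * f ρ := by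
        rw [← mul_assoc, ← Real.exp_add, neg_add_eq_sub]
    _ ≤ _ := by gcongr

section ScaledEnergy

variable {E : Type*} [NormedAddCommGroup E] [InnerProductSpace ℝ E] [FiniteDimensional ℝ E]
  [MeasurableSpace E] [BorelSpace E] {u : E → ℝ}

/-- The scale-invariant energy `r^{4-n} ∫_{B_r(x)} u`, where `n = dim E`; for `u = |F_A|²` it is
the square of the paper's `f₂(x, r)`. The exponent is real, so `n < 4` is covered as well. -/
noncomputable def scaledEnergy (u : E → ℝ) (x : E) (r : ℝ) : ℝ :=
  r ^ ((4 : ℝ) - finrank ℝ E) * ∫ z in ball x r, u z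

lemma scaledEnergy_nonneg {x : E} {r : ℝ} (hr : 0 ≤ r) (hnonneg : ∀ z ∈ ball x r, 0 ≤ u z) :
    0 ≤ scaledEnergy u x r :=
  mul_nonneg (by positivity) (setIntegral_nonneg measurableSet_ball hnonneg)

lemma inv_pow_finrank_mul_setIntegral_ball {s : ℝ} (hs : 0 < s) (u : E → ℝ) (y : E) :
    (s ^ finrank ℝ E)⁻¹ * ∫ z in ball y s, u z = scaledEnergy u y s / s ^ 4 := by
  have split_power : s ^ ((4 : ℝ) - finrank ℝ E) = s ^ 4 / s ^ finrank ℝ E := by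
    rw [Real.rpow_sub hs, Real.rpow_natCast]
    norm_cast
  rw [scaledEnergy, split_power]
  field_simp

lemma scaledEnergy_half_le {x₀ y : E} {r : ℝ} (hr : 0 < r) (hu : Continuous u)
    (hnonneg : ∀ z ∈ ball x₀ r, 0 ≤ u z) (hy : y ∈ ball x₀ (r / 2)) :
    scaledEnergy u y (r / 2) ≤ (1 / 2) ^ ((4 : ℝ) - finrank ℝ E) * scaledEnergy u x₀ r := by
  have integral_le : ∫ z in ball y (r / 2), u z ≤ ∫ z in ball x₀ r, u z := by
    refine setIntegral_mono_set
      ((hu.continuousOn.integrableOn_compact (isCompact_closedBall x₀ r)).mono_set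
        ball_subset_closedBall)
      (ae_restrict_of_forall_mem measurableSet_ball hnonneg)
      (ball_subset_ball' ?_).eventuallyLE
    linarith [mem_ball.1 hy]
  calc scaledEnergy u y (r / 2)
      ≤ (r / 2) ^ ((4 : ℝ) - finrank ℝ E) * ∫ z in ball x₀ r, u z := by
        unfold scaledEnergy
        gcongr
    _ = _ := by
        rw [scaledEnergy, ← mul_assoc, ← Real.mul_rpow (by norm_num) hr.le, one_div_mul_eq_div]

lemma scaledEnergy_le_of_monotoneOn {x₀ y : E} {a r s : ℝ} (hr : r ≤ 1) (hu : Continuous u)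
    (hnonneg : ∀ z ∈ ball x₀ r, 0 ≤ u z) (hy : y ∈ ball x₀ (r / 2))
    (hmono : MonotoneOn (fun s => Real.exp (a * s) * scaledEnergy u y s) (Ioc 0 (r / 2)))
    (hs : s ∈ Ioc 0 (r / 2)) :
    scaledEnergy u y s ≤
      Real.exp |a| * (1 / 2) ^ ((4 : ℝ) - finrank ℝ E) * scaledEnergy u x₀ r := by
  have hr0 : 0 < r := by linarith [hs.1, hs.2]
  have half_nonneg : 0 ≤ scaledEnergy u y (r / 2) :=
    scaledEnergy_nonneg (by positivity) fun z hz =>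
      hnonneg z (ball_subset_ball' (by linarith [mem_ball.1 hy]) hz)
  calc scaledEnergy u y s
      ≤ Real.exp (|a| * (r / 2)) * scaledEnergy u y (r / 2) :=
        le_exp_abs_mul_of_monotoneOn_exp_mul hmono hs half_nonneg
    _ ≤ Real.exp |a| * scaledEnergy u y (r / 2) := by
        gcongr
        exact mul_le_of_le_one_right (abs_nonneg a) (by linarith)
    _ ≤ _ := by
        rw [mul_assoc]
        gcongr
        exact scaledEnergy_half_le hr0 hu hnonneg hy

end ScaledEnergy

-- Schoen's point selection. If the maximum over the closed ball is attained on its boundary, it is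
-- `0`, and `x₀` is a maximizer as well.
lemma exists_mem_ball_forall_mul_pow_le {X : Type*} [PseudoMetricSpace X] [ProperSpace X]
    {f : X → ℝ} {x₀ : X} {R : ℝ} {k : ℕ} (hR : 0 < R) (hk : k ≠ 0)
    (hf : ContinuousOn f (closedBall x₀ R)) (hx₀ : 0 ≤ f x₀) :
    ∃ y ∈ ball x₀ R, ∀ x ∈ closedBall x₀ R,
      f x * (R - dist x x₀) ^ k ≤ f y * (R - dist y x₀) ^ k := by
  obtain ⟨y, hy, hmax⟩ := (isCompact_closedBall x₀ R).exists_isMaxOn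
    (f := fun x => f x * (R - dist x x₀) ^ k) ⟨x₀, mem_closedBall_self hR.le⟩ (by fun_prop)
  rcases (mem_closedBall.1 hy).lt_or_eq with hlt | hboundary
  · exact ⟨y, hlt, hmax⟩
  · have max_nonpos : ∀ x ∈ closedBall x₀ R, f x * (R - dist x x₀) ^ k ≤ 0 := fun x hx => by
      simpa [hboundary, hk] using hmax hx
    refine ⟨x₀, mem_ball_self hR, fun x hx => (max_nonpos x hx).trans ?_⟩
    rw [dist_self, sub_zero]
    positivity

lemma le_two_pow_mul_of_forall_mul_pow_le {X : Type*} [PseudoMetricSpace X] {f : X → ℝ}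
    {x₀ y z : X} {R : ℝ} {k : ℕ} (hy : y ∈ ball x₀ R)
    (hmax : ∀ x ∈ closedBall x₀ R, f x * (R - dist x x₀) ^ k ≤ f y * (R - dist y x₀) ^ k)
    (hz : z ∈ ball y ((R - dist y x₀) / 2)) (hfz : 0 ≤ f z) : f z ≤ 2 ^ k * f y := by
  rw [mem_ball] at hy hz
  have hd : 0 < R - dist y x₀ := sub_pos.2 hy
  have half_le : (R - dist y x₀) / 2 ≤ R - dist z x₀ := by linarith [dist_triangle z y x₀]
  have weighted : f z * ((R - dist y x₀) / 2) ^ k ≤ f y * (R - dist y x₀) ^ k :=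
    calc f z * ((R - dist y x₀) / 2) ^ k ≤ f z * (R - dist z x₀) ^ k := by gcongr
      _ ≤ _ := hmax z (mem_closedBall.2 (by linarith))
  rw [div_pow, ← mul_div_assoc, div_le_iff₀ (by positivity)] at weighted
  refine le_of_mul_le_mul_right (weighted.trans_eq ?_) (pow_pos hd k)
  ring

section CoreEstimate

lemma neg_le_neg_mul_rpow_add {v B : ℝ} (c : ℝ) (hv : 0 ≤ v) (hvB : v ≤ B) :
    -(|c| * (√B + 1) * B) ≤ -c * (v ^ ((3 : ℝ) / 2) + v) := by
  have rpow_eq : v ^ ((3 : ℝ) / 2) = √v * v := by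
    rw [Real.sqrt_eq_rpow, show (3 : ℝ) / 2 = 1 / 2 + 1 by norm_num,
      Real.rpow_add_one' hv (by norm_num)]
  rw [rpow_eq, neg_mul, neg_le_neg_iff]
  calc c * (√v * v + v) = c * ((√v + 1) * v) := by ring
    _ ≤ |c| * ((√B + 1) * B) := by
      gcongr
      exact le_abs_self c
    _ = _ := by ring

lemma exists_radius_mul_sq_le {d K : ℝ} (hd : 0 < d) (hK : 0 ≤ K) :
    ∃ s ∈ Ioc 0 (d / 2), K * s ^ 2 ≤ 1 / 4 ∧ d ^ 4 / s ^ 4 = 16 * (1 + K * d ^ 2) ^ 2 := by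
  set q : ℝ := 1 + K * d ^ 2
  have hq : 1 ≤ q := le_add_of_nonneg_right (by positivity)
  have hq0 : 0 < q := by positivity
  have hsqrt : √q ^ 2 = q := Real.sq_sqrt hq0.le
  refine ⟨d / (2 * √q), ⟨by positivity, ?_⟩, ?_, ?_⟩
  · gcongr
    linarith [Real.one_le_sqrt.2 hq]
  · rw [div_pow, mul_pow, hsqrt, ← mul_div_assoc, div_le_iff₀ (by positivity)]
    linarith
  · rw [div_pow, mul_pow, show √q ^ 4 = (√q ^ 2) ^ 2 by ring, hsqrt]
    field_simp
    norm_num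

-- `1536 = 2 * 16 * 3 * 16`: half of `M * d ^ 4` absorbs the term of `16 * Q * (...) ^ 2` in `M`.
lemma mul_pow_four_le_of_le_mul_sq {M d c Q : ℝ} (hM : 0 ≤ M) (hd : 0 ≤ d) (hd1 : d ≤ 1)
    (hQ : 0 ≤ Q) (hsmall : 1536 * c ^ 2 * Q ≤ 1)
    (h : M * d ^ 4 ≤ 16 * Q * (1 + |c| * (√(16 * M) + 1) * d ^ 2) ^ 2) :
    M * d ^ 4 ≤ 96 * Q * (1 + c ^ 2) := by
  have sq_le : (1 + |c| * (√(16 * M) + 1) * d ^ 2) ^ 2 ≤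
      3 * (1 + 16 * c ^ 2 * (M * d ^ 4) + c ^ 2) := by
    have hsqrt : √(16 * M) ^ 2 = 16 * M := Real.sq_sqrt (by positivity)
    have three_sq (p q : ℝ) : (1 + p + q) ^ 2 ≤ 3 * (1 + p ^ 2 + q ^ 2) := by
      nlinarith [sq_nonneg (1 - p), sq_nonneg (1 - q), sq_nonneg (p - q)]
    calc (1 + |c| * (√(16 * M) + 1) * d ^ 2) ^ 2
        = (1 + |c| * √(16 * M) * d ^ 2 + |c| * d ^ 2) ^ 2 := by ring
      _ ≤ 3 * (1 + (|c| * √(16 * M) * d ^ 2) ^ 2 + (|c| * d ^ 2) ^ 2) := three_sq _ _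
      _ = 3 * (1 + 16 * c ^ 2 * (M * d ^ 4) + c ^ 2 * d ^ 4) := by
        simp only [mul_pow, sq_abs, hsqrt]
        ring
      _ ≤ _ := by
        gcongr
        exact mul_le_of_le_one_right (sq_nonneg c) (pow_le_one₀ hd hd1)
  have absorbed := mul_le_mul_of_nonneg_right hsmall (show 0 ≤ M * d ^ 4 by positivity)
  linarith [mul_le_mul_of_nonneg_left sq_le (show 0 ≤ 16 * Q by positivity)]

variable {E : Type*} [NormedAddCommGroup E] [InnerProductSpace ℝ E] [FiniteDimensional ℝ E]
  [MeasurableSpace E] [BorelSpace E] {u : E → ℝ} {y : E}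

lemma mul_integral_epanechnikov_le_scaledEnergy {s K : ℝ} (hu : ContDiff ℝ 2 u) (hs : 0 < s)
    (hK : 0 ≤ K) (hKs : K * s ^ 2 ≤ 1 / 4) (hnonneg : ∀ z ∈ ball y s, 0 ≤ u z)
    (hΔ : ∀ z ∈ ball y s, -(K * (16 * u y)) ≤ Δ u z) :
    u y * ∫ z : E, epanechnikov z ≤ 2 * (scaledEnergy u y s / s ^ 4) := by
  have huy : 0 ≤ u y := hnonneg y (mem_ball_self hs)
  have mean_value := mul_integral_epanechnikov_le_of_neg_le_laplacian hu hs (by positivity)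
    hnonneg hΔ
  rw [inv_pow_finrank_mul_setIntegral_ball hs] at mean_value
  have error_le : K * (16 * u y) * s ^ 2 / 8 * ∫ z : E, epanechnikov z ≤
      1 / 2 * (u y * ∫ z : E, epanechnikov z) := by
    have := mul_le_mul_of_nonneg_right hKs
      (mul_nonneg huy (integral_epanechnikov_pos E).le)
    linarith
  linarith

lemma mul_pow_four_le_of_le_sixteen_mul {d c Λ : ℝ} (hu : ContDiff ℝ 2 u) (hd : 0 < d)
    (hd1 : d ≤ 1) (hnonneg : ∀ z ∈ ball y (d / 2), 0 ≤ u z)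
    (hle : ∀ z ∈ ball y (d / 2), u z ≤ 16 * u y)
    (hΔ : ∀ z ∈ ball y (d / 2), -c * (u z ^ ((3 : ℝ) / 2) + u z) ≤ Δ u z)
    (henergy : ∀ s ∈ Ioc 0 (d / 2), scaledEnergy u y s ≤ Λ * ∫ z : E, epanechnikov z)
    (hsmall : 3072 * c ^ 2 * Λ ≤ 1) :
    u y * d ^ 4 ≤ 192 * (1 + c ^ 2) * Λ := by
  have huy : 0 ≤ u y := hnonneg y (mem_ball_self (half_pos hd))
  have hΛ : 0 ≤ Λ := nonneg_of_mul_nonneg_left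
    ((scaledEnergy_nonneg (half_pos hd).le hnonneg).trans (henergy _ ⟨half_pos hd, le_rfl⟩))
    (integral_epanechnikov_pos E)
  set K : ℝ := |c| * (√(16 * u y) + 1)
  obtain ⟨s, hs, hKs, hds⟩ := exists_radius_mul_sq_le hd (K := K) (by positivity)
  have hball : ball y s ⊆ ball y (d / 2) := ball_subset_ball hs.2
  have mean_value : u y * ∫ z : E, epanechnikov z ≤ 2 * (scaledEnergy u y s / s ^ 4) :=
    mul_integral_epanechnikov_le_scaledEnergy hu hs.1 (by positivity) hKs
      (fun z hz => hnonneg z (hball hz)) fun z hz =>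
        (neg_le_neg_mul_rpow_add c (hnonneg z (hball hz)) (hle z (hball hz))).trans
          (hΔ z (hball hz))
  have hs4 : 0 < s ^ 4 := pow_pos hs.1 4
  have huy_le : u y ≤ 2 * Λ / s ^ 4 := by
    refine le_of_mul_le_mul_right (mean_value.trans ?_) (integral_epanechnikov_pos E)
    calc 2 * (scaledEnergy u y s / s ^ 4)
        ≤ 2 * ((Λ * ∫ z : E, epanechnikov z) / s ^ 4) := by
          gcongr
          exact henergy s hs
      _ = _ := by ring
  have huy_mul_le : u y * d ^ 4 ≤ 16 * (2 * Λ) * (1 + K * d ^ 2) ^ 2 :=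
    calc u y * d ^ 4 ≤ 2 * Λ / s ^ 4 * d ^ 4 := by gcongr
      _ = 2 * Λ * (d ^ 4 / s ^ 4) := by ring
      _ = _ := by
        rw [hds]
        ring
  linarith [mul_pow_four_le_of_le_mul_sq huy hd.le hd1 (by positivity) (by linarith) huy_mul_le]

lemma mul_half_pow_four_le_of_scaledEnergy_le {x₀ x : E} {R c Λ : ℝ} (hu : ContDiff ℝ 2 u)
    (hR : R ≤ 1) (hnonneg : ∀ z ∈ ball x₀ R, 0 ≤ u z)
    (hΔ : ∀ z ∈ ball x₀ R, -c * (u z ^ ((3 : ℝ) / 2) + u z) ≤ Δ u z)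
    (henergy : ∀ y ∈ ball x₀ R, ∀ s ∈ Ioc 0 R,
      scaledEnergy u y s ≤ Λ * ∫ z : E, epanechnikov z)
    (hsmall : 3072 * c ^ 2 * Λ ≤ 1) (hx : x ∈ ball x₀ (R / 2)) :
    u x * (R / 2) ^ 4 ≤ 192 * (1 + c ^ 2) * Λ := by
  have hR0 : 0 < R := by linarith [pos_of_mem_ball hx]
  obtain ⟨y, hy, hmax⟩ := exists_mem_ball_forall_mul_pow_le hR0 four_ne_zero
    hu.continuous.continuousOn (hnonneg x₀ (mem_ball_self hR0))
  have hd : 0 < R - dist y x₀ := sub_pos.2 hy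
  have hdR : R - dist y x₀ ≤ R := sub_le_self R dist_nonneg
  have hsub : ball y ((R - dist y x₀) / 2) ⊆ ball x₀ R := ball_subset_ball' (by linarith)
  have hxR : x ∈ ball x₀ R := ball_subset_ball (by linarith) hx
  calc u x * (R / 2) ^ 4 ≤ u x * (R - dist x x₀) ^ 4 := by
        have := hnonneg x hxR
        gcongr
        linarith [mem_ball.1 hx]
    _ ≤ u y * (R - dist y x₀) ^ 4 := hmax x (ball_subset_closedBall hxR)
    _ ≤ _ := mul_pow_four_le_of_le_sixteen_mul hu hd (hdR.trans hR)
        (fun z hz => hnonneg z (hsub hz))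
        (fun z hz => (le_two_pow_mul_of_forall_mul_pow_le hy hmax hz
          (hnonneg z (hsub hz))).trans_eq (by norm_num))
        (fun z hz => hΔ z (hsub hz))
        (fun s hs => henergy y hy s ⟨hs.1, by linarith [hs.2]⟩) hsmall

end CoreEstimate

lemma euclideanLaplacian_eq_laplacian {n : ℕ} (u : EuclideanSpace ℝ (Fin n) → ℝ) :
    euclideanLaplacian u = Δ u := by
  ext x
  simp [euclideanLaplacian,
    laplacian_eq_iteratedFDeriv_orthonormalBasis u (EuclideanSpace.basisFun (Fin n) ℝ)]

theorem epsilon_regularity_sup_bound_general (E : Type*) [NormedAddCommGroup E]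
    [InnerProductSpace ℝ E] [FiniteDimensional ℝ E] [MeasurableSpace E] [BorelSpace E]
    (a c₀ : ℝ) :
    ∃ ε₀ : ℝ, 0 < ε₀ ∧ ∃ C : ℝ, 0 < C ∧
      ∀ (x₀ : E) (r : ℝ), 0 < r → r ≤ 1 →
      ∀ u : E → ℝ, ContDiff ℝ 2 u →
        (∀ x ∈ ball x₀ r, 0 ≤ u x) →
        (∀ x ∈ ball x₀ r, -c₀ * (u x ^ ((3 : ℝ) / 2) + u x) ≤ Δ u x) →
        (∀ y ∈ ball x₀ (r / 2),
          MonotoneOn (fun s => Real.exp (a * s) * scaledEnergy u y s) (Ioc 0 (r / 2))) →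
        scaledEnergy u x₀ r ≤ ε₀ ^ 2 →
        ∀ x ∈ ball x₀ (r / 4), u x ≤ C * r ^ (-4 : ℝ) * scaledEnergy u x₀ r := by
  have hA : 0 < ∫ z : E, epanechnikov z := integral_epanechnikov_pos E
  set θ : ℝ := Real.exp |a| * (1 / 2) ^ ((4 : ℝ) - finrank ℝ E) / ∫ z : E, epanechnikov z with hθ
  have : 0 < θ := by positivity
  refine ⟨√(1 / (3072 * c₀ ^ 2 * θ + 1)), by positivity, 256 * (192 * (1 + c₀ ^ 2) * θ),
    by positivity, fun x₀ r hr hr1 u hu hnonneg hΔ hmono hsmall x hx => ?_⟩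
  rw [Real.sq_sqrt (by positivity), le_div_iff₀ (by positivity)] at hsmall
  have henergy0 : 0 ≤ scaledEnergy u x₀ r := scaledEnergy_nonneg hr.le hnonneg
  have henergy : ∀ y ∈ ball x₀ (r / 2), ∀ s ∈ Ioc 0 (r / 2),
      scaledEnergy u y s ≤ θ * scaledEnergy u x₀ r * ∫ z : E, epanechnikov z := by
    intro y hy s hs
    refine (scaledEnergy_le_of_monotoneOn hr1 hu.continuous hnonneg hy (hmono y hy) hs).trans_eq ?_
    rw [hθ]
    field_simp
  have hhalf : ball x₀ (r / 2) ⊆ ball x₀ r := ball_subset_ball (by linarith)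
  have hux : u x * (r / 2 / 2) ^ 4 ≤ 192 * (1 + c₀ ^ 2) * (θ * scaledEnergy u x₀ r) :=
    mul_half_pow_four_le_of_scaledEnergy_le hu (by linarith) (fun z hz => hnonneg z (hhalf hz))
      (fun z hz => hΔ z (hhalf hz)) henergy (by linarith)
      (ball_subset_ball (by linarith) hx)
  have hr4 : r ^ (-4 : ℝ) = (r ^ 4)⁻¹ := by
    rw [Real.rpow_neg hr.le]
    norm_cast
  rw [hr4, mul_right_comm, ← div_eq_mul_inv, le_div_iff₀ (by positivity)]
  linarith

/-- ε-regularity, analytic core. For `n ≥ 4`, `a ≥ 0`, `c₀ ≥ 0` there are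
`ε₀ > 0` and `C > 0`, depending only on `n, a, c₀`, such that: if `u` is a `C²` function,
nonnegative on `ball x₀ r` (with `0 < r ≤ 1`), satisfying `Δu ≥ -c₀ (u^{3/2} + u)` there, and
whose scaled local energies `s ↦ e^{a s} s^{4-n} ∫_{ball y s} u` are nondecreasing on
`(0, r/2]` for all `y ∈ ball x₀ (r/2)`, and if `r^{4-n} ∫_{ball x₀ r} u ≤ ε₀²`, then
`sup_{ball x₀ (r/4)} u ≤ C r⁻⁴ (r^{4-n} ∫_{ball x₀ r} u)`. -/
theorem epsilon_regularity_sup_bound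
    (n : ℕ) (hn : 4 ≤ n) (a : ℝ) (ha : 0 ≤ a) (c₀ : ℝ) (hc₀ : 0 ≤ c₀) :
    ∃ ε₀ : ℝ, 0 < ε₀ ∧ ∃ C : ℝ, 0 < C ∧
      ∀ (x₀ : EuclideanSpace ℝ (Fin n)) (r : ℝ), 0 < r → r ≤ 1 →
      ∀ u : EuclideanSpace ℝ (Fin n) → ℝ, ContDiff ℝ 2 u →
        (∀ x ∈ ball x₀ r, 0 ≤ u x) →
        (∀ x ∈ ball x₀ r,
          -c₀ * (u x ^ ((3 : ℝ) / 2) + u x) ≤ euclideanLaplacian u x) →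
        (∀ y ∈ ball x₀ (r / 2),
          MonotoneOn
            (fun s : ℝ => Real.exp (a * s) * s ^ ((4 : ℝ) - n) * ∫ z in ball y s, u z)
            (Ioc (0 : ℝ) (r / 2))) →
        r ^ ((4 : ℝ) - n) * (∫ z in ball x₀ r, u z) ≤ ε₀ ^ 2 →
        ∀ x ∈ ball x₀ (r / 4),
          u x ≤ C * r ^ (-4 : ℝ) * (r ^ ((4 : ℝ) - n) * ∫ z in ball x₀ r, u z) := by
  simpa only [euclideanLaplacian_eq_laplacian, scaledEnergy, finrank_euclideanSpace_fin,
    mul_assoc] using epsilon_regularity_sup_bound_general (EuclideanSpace ℝ (Fin n)) a c₀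
end
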